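/- Let n ≥ 2, let (M,g) = (ℝ^n, g) with reference point o be an asymptotically conical Riemannian manifold with opening angle α ∈ (0,π/2) and asymptotic decay rate μ > 0, and assume the exponential map of (M,g) is proper at each point. Let {γ_j : [0,∞) → M}_{j ∈ ℕ} be geodesic rays of (M,g) parametrised by g-arc-length with γ_j(0) ∈ ∂B(o,r) and unit initial velocity γ̇_j(0), such that (γ_j(0), γ̇_j(0)) → (p, ξ) as j → ∞ for some r > 0, p ∈ ∂B(o,r) and unit vector ξ ∈ T_pM. Define T_j := max{t > 0 : |γ_j(t)| = r}. Then each T_j is finite and sup_{j ∈ ℕ} T_j = sup_{j ∈ ℕ} ℓ_g(γ_j|_{[0,T_j]}) < ∞. -/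

import Mathlib

/-!
Escaping to infinity is a stable property of geodesic rays, and the unit tangent vectors based in a
ball form a compact set.

An asymptotically conical metric is a `C²` field `B` of bilinear forms which is uniformly equivalent
to the Euclidean metric (`IsAsympConical.exists_isUniformlyEuclidean`) and which, far out, satisfies
`B x v x ≈ ⟪v, x⟫` and has small radial derivative `∂_x B`
(`IsAsympConical.exists_isAlmostConical`): the cone metric is invariant under dilations, so only
`A = g - g_cone` contributes to the latter.

Geodesics are given as local isometries of the distance, so it has to be shown that they solve the
geodesic equation (`IsUnitGeodesicOn.of_isGeodesicOn`). A curve which is isometric on an interval is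
Lipschitz, has unit speed almost everywhere and minimises the energy among Lipschitz curves. The
first variation and the du Bois-Reymond lemma show that the momentum `P = B(γ)(γ̇)` agrees almost
everywhere with a primitive of the force `w ↦ ½ (∂_w B)(γ̇, γ̇)`; hence `γ` is `C¹` with `P`
differentiable. Grönwall's inequality then gives uniqueness and continuous dependence on the initial
data (`IsUniformlyEuclidean.exists_forall_dist_phase_le`).

Along a unit speed geodesic, the radial momentum `u = P(γ)` has derivative `1 + ½ (∂_γ B)(γ̇, γ̇)`,
close to `1` far out, so `u - (k/4)|γ|` grows linearly while the geodesic stays outside a large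
ball. Consequently a geodesic outside the ball with `u > (k/4)|γ|` never comes back
(`IsUnitGeodesicOn.lt_norm_of_phase_mem`), and one that stays outside eventually satisfies this open
condition.

Properness of the exponential map makes every geodesic ray leave every ball for good
(`IsUnitGeodesicOn.tendsto_cocompact`), hence satisfy the escape condition at some time. By
continuous dependence all rays with nearby initial data satisfy it at the same time, and compactness
of the set of initial data makes the last return time uniformly bounded
(`IsUniformlyEuclidean.exists_forall_lt_norm`).
-/

open scoped RealInnerProductSpace
open Real Set Filter

noncomputable section

/-- Euclidean `n`-space. -/
abbrev En (n : ℕ) : Type := EuclideanSpace ℝ (Fin n)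

/-- A (pointwise) metric tensor on `ℝⁿ`: to each point it assigns a bilinear form,
recorded simply as an `ℝ`-valued function of two tangent vectors (tangent spaces being
identified with `ℝⁿ`). -/
abbrev MetricTensor (n : ℕ) : Type := En n → En n → En n → ℝ

/-- The standard cone metric `g_{C_α^n}` of opening angle `α`, written in Cartesian
coordinates on `ℝⁿ \ {0}`:  `g_{C_α^n} = (1 - sin²α)·dρ⊗dρ + sin²α·(euclidean metric)`,
where `dρ(v) = ⟪v, x/‖x‖⟫`; this is `dρ⊗dρ + ρ² sin²α · g_{S^{n-1}}` in polar
coordinates. -/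
def coneMetric (n : ℕ) (α : ℝ) : MetricTensor n := fun x v w =>
  (1 - Real.sin α ^ 2) * (⟪v, x⟫ * ⟪w, x⟫ / ‖x‖ ^ 2) + Real.sin α ^ 2 * ⟪v, w⟫

variable {n : ℕ}

/-- Length of a curve on `[a,b]` with respect to a metric tensor. -/
def clen (G : MetricTensor n) (γ : ℝ → En n) (a b : ℝ) : ℝ :=
  ∫ t in a..b, Real.sqrt (G (γ t) (deriv γ t) (deriv γ t))

/-- Energy of a curve on `[a,b]` with respect to a metric tensor. -/
def cenergy (G : MetricTensor n) (γ : ℝ → En n) (a b : ℝ) : ℝ :=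
  ∫ t in a..b, G (γ t) (deriv γ t) (deriv γ t)

/-- The Riemannian (length) distance induced by a metric tensor:
the infimum of lengths of `C¹` curves joining the two points. -/
def rdist (G : MetricTensor n) (x y : En n) : ℝ :=
  sInf {L : ℝ | ∃ γ : ℝ → En n, ContDiff ℝ 1 γ ∧ γ 0 = x ∧ γ 1 = y ∧ L = clen G γ 0 1}

/-- The intrinsic (induced length) distance of the subset `S` for the metric tensor `G`:
the infimum of lengths of `C¹` curves joining the two points inside `S`. -/
def rdistIn (G : MetricTensor n) (S : Set (En n)) (x y : En n) : ℝ :=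
  sInf {L : ℝ | ∃ γ : ℝ → En n, ContDiff ℝ 1 γ ∧ (∀ t ∈ Set.Icc (0:ℝ) 1, γ t ∈ S) ∧
    γ 0 = x ∧ γ 1 = y ∧ L = clen G γ 0 1}

/-- `γ`, restricted to the parameter set `I`, is a geodesic of the distance `d` with
constant speed `c`: locally it is a homothety of factor `c` (for `c = 1` this is a local
isometry, i.e. the arc-length parametrisation). -/
def IsGeodesicOn (d : En n → En n → ℝ) (γ : ℝ → En n) (c : ℝ) (I : Set ℝ) : Prop :=
  ∀ t ∈ I, ∃ δ > 0, ∀ s ∈ I, ∀ u ∈ I, |s - t| < δ → |u - t| < δ →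
    d (γ s) (γ u) = c * |s - u|

/-- A length-minimising geodesic segment from `p` to `q`, parametrised on `[0,1]`
with constant speed `d p q`. -/
def IsMinSeg (d : En n → En n → ℝ) (γ : ℝ → En n) (p q : En n) : Prop :=
  γ 0 = p ∧ γ 1 = q ∧
    ∀ s ∈ Set.Icc (0:ℝ) 1, ∀ u ∈ Set.Icc (0:ℝ) 1, d (γ s) (γ u) = d p q * |s - u|

/-- The distance of the standard cone `C_α^n`. -/
def coneDist (n : ℕ) (α : ℝ) : En n → En n → ℝ := rdist (coneMetric n α)

/-- `(ℝⁿ, g)` is an asymptotically conical `C²` Riemannian manifold with opening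
angle `α` and asymptotic decay rate `μ`: `g` is a complete `C²` Riemannian metric and
`A := g - g_{C_α^n}` has components whose derivatives of order `k ≤ 2` are
`O(|x|^{-μ-k})` at infinity. -/
structure IsAsympConical (n : ℕ) (g : MetricTensor n) (α μ : ℝ) : Prop where
  symm : ∀ x v w, g x v w = g x w v
  add_left : ∀ x v w u, g x (v + w) u = g x v u + g x w u
  smul_left : ∀ x (a : ℝ) v u, g x (a • v) u = a * g x v u
  posdef : ∀ x v, v ≠ 0 → 0 < g x v v
  reg : ∀ i j : Fin n, ContDiff ℝ 2
    (fun x => g x (EuclideanSpace.single i 1) (EuclideanSpace.single j 1))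
  decay : ∀ i j : Fin n, ∃ C R : ℝ, 0 < C ∧ ∀ x : En n, R ≤ ‖x‖ → ∀ k : ℕ, k ≤ 2 →
    ‖iteratedFDeriv ℝ k (fun y =>
        g y (EuclideanSpace.single i 1) (EuclideanSpace.single j 1) -
        coneMetric n α y (EuclideanSpace.single i 1) (EuclideanSpace.single j 1)) x‖ ≤
      C * ‖x‖ ^ (-μ - (k : ℝ))
  complete : ∀ u : ℕ → En n,
    (∀ ε > 0, ∃ N, ∀ m ≥ N, ∀ k ≥ N, rdist g (u m) (u k) < ε) →
    ∃ x, ∀ ε > 0, ∃ N, ∀ m ≥ N, rdist g (u m) x < ε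

/-- `ex` is the exponential map of the metric tensor `g` at the point `x`
(tangent spaces being identified with `ℝⁿ`): `ex v = γ_v(1)` where `γ_v` is the
constant-speed geodesic with `γ_v(0) = x`, `γ̇_v(0) = v`. -/
def IsExpAt (g : MetricTensor n) (x : En n) (ex : En n → En n) : Prop :=
  ∀ v : En n, ∃ γ : ℝ → En n, γ 0 = x ∧ deriv γ 0 = v ∧
    IsGeodesicOn (rdist g) γ (Real.sqrt (g x v v)) Set.univ ∧ ex v = γ 1

/-- The exponential map of `g` exists and is proper at every point: preimages of
compact sets are compact. -/
def ProperExpAll (g : MetricTensor n) : Prop :=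
  ∀ x : En n, ∃ ex : En n → En n, IsExpAt g x ex ∧
    ∀ K : Set (En n), IsCompact K → IsCompact (ex ⁻¹' K)

/-- Second variation of the energy of `γ` on `[a,b]` along the variation field `V`
(using the global chart to form the variation `γ + s·V`). -/
def secondVar (g : MetricTensor n) (γ V : ℝ → En n) (a b : ℝ) : ℝ :=
  iteratedDeriv 2 (fun s : ℝ => cenergy g (fun t => γ t + s • V t) a b) 0

/-- The Morse index of `γ` on `[a,b]`, as a critical point of the energy, is at most
`m`: every linear space of `C¹` variation fields vanishing at the endpoints on which the
second variation of the energy is negative definite has dimension at most `m`. -/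
def MorseIndexLEOn (g : MetricTensor n) (γ : ℝ → En n) (a b : ℝ) (m : ℕ) : Prop :=
  ∀ W : Submodule ℝ (ℝ → En n),
    (∀ V ∈ W, ContDiff ℝ 1 V ∧ V a = 0 ∧ V b = 0) →
    (∀ V ∈ W, V ≠ 0 → secondVar g γ V a b < 0) →
    Module.rank ℝ W ≤ (m : Cardinal)

end

section Integration

open MeasureTheory
open scoped ContDiff

variable {F : Type*} [NormedAddCommGroup F] {a b : ℝ}

lemma intervalIntegrable_of_norm_le {f : ℝ → F} {M : ℝ} (hf : AEStronglyMeasurable f volume)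
    (hM : ∀ t, ‖f t‖ ≤ M) : IntervalIntegrable f volume a b :=
  (intervalIntegrable_const (c := M)).mono_fun' hf.restrict (Eventually.of_forall hM)

lemma intervalIntegrable_comp_deriv {E : Type*} [NormedAddCommGroup E] [NormedSpace ℝ E]
    [FiniteDimensional ℝ E] {Φ : E × E → F} (hΦ : Continuous Φ) {C : NNReal} {x : ℝ → E}
    (hx : LipschitzWith C x) : IntervalIntegrable (fun t => Φ (x t, deriv x t)) volume a b := by
  have := FiniteDimensional.proper ℝ E
  obtain ⟨D, hD⟩ := ((isCompact_uIcc.image hx.continuous).prod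
    (isCompact_closedBall (0 : E) C)).exists_bound_of_continuousOn hΦ.continuousOn
  refine (intervalIntegrable_const (c := D)).mono_fun' (hΦ.comp_aestronglyMeasurable
    (hx.continuous.aestronglyMeasurable.prodMk
      (stronglyMeasurable_deriv x).aestronglyMeasurable)).restrict ?_
  filter_upwards [ae_restrict_mem measurableSet_uIoc] with t ht
  exact hD _ ⟨mem_image_of_mem x (uIoc_subset_uIcc ht),
    mem_closedBall_zero_iff.2 (norm_deriv_le_of_lipschitz hx)⟩

variable [NormedSpace ℝ F]

/-! ### Vector-valued absolutely continuous functions -/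

lemma intervalIntegrable_deriv_smul {C : NNReal} {φ : ℝ → ℝ} (hφ : LipschitzWith C φ) {f : ℝ → F}
    (hf : IntervalIntegrable f volume a b) :
    IntervalIntegrable (fun t => deriv φ t • f t) volume a b :=
  intervalIntegrable_iff.2 <| (intervalIntegrable_iff.1 hf).bdd_smul C
    (measurable_deriv φ).aestronglyMeasurable.restrict
    (Eventually.of_forall fun _ => norm_deriv_le_of_lipschitz hφ)

lemma absolutelyContinuousOnInterval_integral {f : ℝ → F}
    (hf : IntervalIntegrable f volume a b) :
    AbsolutelyContinuousOnInterval (fun t => ∫ s in a..t, f s) a b := by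
  have hnorm := hf.norm.absolutelyContinuousOnInterval_intervalIntegral (c := a) left_mem_uIcc
  refine squeeze_zero' (Eventually.of_forall fun _ => Finset.sum_nonneg fun _ _ => dist_nonneg)
    ?_ hnorm
  filter_upwards [mem_inf_of_right (mem_principal_self _)] with E hE
  refine Finset.sum_le_sum fun i hi => ?_
  have hsub {t : ℝ} (ht : t ∈ uIcc a b) : IntervalIntegrable f volume a t :=
    hf.mono_set (uIcc_subset_uIcc_left ht)
  obtain ⟨h1, h2⟩ := hE.1 i hi
  rw [dist_comm, dist_comm (∫ s in a..(E.2 i).1, ‖f s‖), dist_eq_norm, dist_eq_norm,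
    intervalIntegral.integral_interval_sub_left (hsub h2) (hsub h1),
    intervalIntegral.integral_interval_sub_left (hsub h2).norm (hsub h1).norm]
  exact intervalIntegral.norm_integral_le_abs_integral_norm

lemma integral_eq_sub_of_ae_hasDerivAt [CompleteSpace F] {f f' : ℝ → F}
    (hf : AbsolutelyContinuousOnInterval f a b)
    (hf' : IntervalIntegrable f' volume a b)
    (h : ∀ᵐ t, t ∈ uIcc a b → HasDerivAt f (f' t) t) : ∫ t in a..b, f' t = f b - f a := by
  have hzero : ∀ᵐ t, t ∈ uIcc a b → HasDerivAt (fun t => f t - ∫ s in a..t, f' s) 0 t := by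
    filter_upwards [h, hf'.ae_hasDerivAt_integral] with t h1 h2 ht
    simpa using (h1 ht).fun_sub (h2 ht a left_mem_uIcc)
  obtain ⟨c, hc⟩ :=
    (hf.fun_sub (absolutelyContinuousOnInterval_integral hf')).const_of_ae_hasDerivAt_zero hzero
  have ha := hc a left_mem_uIcc
  have hb := hc b right_mem_uIcc
  simp only [intervalIntegral.integral_same, sub_zero] at ha
  rw [ha, ← hb, sub_sub_cancel]

lemma integral_smul_add_smul_integral_eq_zero [CompleteSpace F] {f : ℝ → F}
    (hf : IntervalIntegrable f volume a b)
    {C : NNReal} {φ : ℝ → ℝ} (hφ : LipschitzWith C φ) (ha : φ a = 0) (hb : φ b = 0) :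
    ∫ t in a..b, (φ t • f t + deriv φ t • ∫ s in a..t, f s) = 0 := by
  have hφac := (hφ.lipschitzOnWith (s := uIcc a b)).absolutelyContinuousOnInterval
  have hP := absolutelyContinuousOnInterval_integral hf
  have hint : IntervalIntegrable (fun t => φ t • f t + deriv φ t • ∫ s in a..t, f s) volume a b :=
    (hf.continuousOn_smul hφ.continuous.continuousOn).add
      (hφac.intervalIntegrable_deriv.smul_continuousOn hP.continuousOn)
  rw [integral_eq_sub_of_ae_hasDerivAt (hφac.fun_smul hP) hint, ha, hb]
  · simp
  filter_upwards [hφ.ae_differentiableAt_real, hf.ae_hasDerivAt_integral] with t h1 h2 ht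
  exact h1.hasDerivAt.fun_smul (h2 ht a left_mem_uIcc)

/-! ### The du Bois-Reymond lemma -/

lemma integral_smul_sub_average [CompleteSpace F] {q : ℝ → F}
    (hq : IntervalIntegrable q volume a b) {ψ : ℝ → ℝ} (hψ : Continuous ψ) :
    ∫ t in a..b, ψ t • (q t - (b - a)⁻¹ • ∫ s in a..b, q s) =
      ∫ t in a..b, (ψ t - (b - a)⁻¹ * ∫ s in a..b, ψ s) • q t := by
  have hψc (c : F) : IntervalIntegrable (fun t => ψ t • c) volume a b :=
    (hψ.smul continuous_const).intervalIntegrable a b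
  have hψq := hq.continuousOn_smul hψ.continuousOn
  have hcq (c : ℝ) : IntervalIntegrable (fun t => c • q t) volume a b := hq.smul c
  simp only [smul_sub, sub_smul]
  rw [intervalIntegral.integral_sub hψq (hψc _), intervalIntegral.integral_sub hψq (hcq _),
    intervalIntegral.integral_smul_const, intervalIntegral.integral_smul, smul_smul, mul_comm]

lemma integral_smul_sub_average_eq_zero (hab : a < b) {q : ℝ → F}
    (hq : ∀ (C : NNReal) (φ : ℝ → ℝ), LipschitzWith C φ → φ a = 0 → φ b = 0 →
      ∫ t in a..b, deriv φ t • q t = 0) {ψ : ℝ → ℝ} (hψ : Continuous ψ)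
    (hψc : HasCompactSupport ψ) :
    ∫ t in a..b, (ψ t - (b - a)⁻¹ * ∫ s in a..b, ψ s) • q t = 0 := by
  set m := (b - a)⁻¹ * ∫ s in a..b, ψ s with hm
  obtain ⟨C, hC⟩ := hψ.bounded_above_of_compact_support hψc
  have hcont : Continuous fun t => ψ t - m := hψ.sub continuous_const
  have hφ (t : ℝ) : HasDerivAt (fun t => ∫ s in a..t, (ψ s - m)) (ψ t - m) t :=
    (hcont.integral_hasStrictDerivAt a t).hasDerivAt
  have hlip : LipschitzWith (C + ‖m‖).toNNReal fun t => ∫ s in a..t, (ψ s - m) := by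
    refine lipschitzWith_of_nnnorm_deriv_le (fun t => (hφ t).differentiableAt) fun t => ?_
    rw [(hφ t).deriv, ← NNReal.coe_le_coe, coe_nnnorm]
    exact ((norm_sub_le _ _).trans (by grw [hC t])).trans (Real.le_coe_toNNReal _)
  have hend : ∫ s in a..b, (ψ s - m) = 0 := by
    rw [intervalIntegral.integral_sub (hψ.intervalIntegrable a b) (by simp),
      intervalIntegral.integral_const, hm, smul_eq_mul,
      mul_inv_cancel_left₀ (sub_pos.2 hab).ne', sub_self]
  simpa only [(hφ _).deriv] using hq _ _ hlip intervalIntegral.integral_same hend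

theorem exists_ae_eq_const_add_integral_of_forall_lipschitz [CompleteSpace F] (hab : a < b)
    {f h : ℝ → F} (hf : IntervalIntegrable f volume a b) (hh : IntervalIntegrable h volume a b)
    (H : ∀ (C : NNReal) (φ : ℝ → ℝ), LipschitzWith C φ → φ a = 0 → φ b = 0 →
      ∫ t in a..b, (φ t • f t + deriv φ t • h t) = 0) :
    ∃ c, ∀ᵐ t, t ∈ Ioo a b → h t = c + ∫ s in a..t, f s := by
  set q : ℝ → F := fun t => h t - ∫ s in a..t, f s with hq_def
  have hP := (absolutelyContinuousOnInterval_integral hf).continuousOn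
  have hq : IntervalIntegrable q volume a b := hh.sub hP.intervalIntegrable
  have hderiv (C : NNReal) (φ : ℝ → ℝ) (hφ : LipschitzWith C φ) (ha : φ a = 0) (hb : φ b = 0) :
      ∫ t in a..b, deriv φ t • q t = 0 := by
    have hφf := hf.continuousOn_smul (hφ.continuous.continuousOn (s := uIcc a b))
    have hφ'h : IntervalIntegrable (fun t => deriv φ t • h t) volume a b :=
      intervalIntegrable_deriv_smul hφ hh
    have hφ'P : IntervalIntegrable (fun t => deriv φ t • ∫ s in a..t, f s) volume a b :=
      intervalIntegrable_deriv_smul hφ hP.intervalIntegrable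
    have hsub := intervalIntegral.integral_sub (hφf.add hφ'h) (hφf.add hφ'P)
    rw [H C φ hφ ha hb, integral_smul_add_smul_integral_eq_zero hf hφ ha hb, sub_zero] at hsub
    simpa only [add_sub_add_left_eq_sub, ← smul_sub] using hsub
  refine ⟨(b - a)⁻¹ • ∫ s in a..b, q s, ?_⟩
  have hloc : LocallyIntegrableOn (fun t => q t - (b - a)⁻¹ • ∫ s in a..b, q s) (Ioo a b) :=
    ((intervalIntegrable_iff_integrableOn_Ioo_of_le hab.le).1
      (hq.sub intervalIntegrable_const)).locallyIntegrableOn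
  have hzero := isOpen_Ioo.ae_eq_zero_of_integral_contDiff_smul_eq_zero hloc
    fun ψ hψ hψc hψs => by
      rw [← setIntegral_eq_integral_of_forall_compl_eq_zero (s := Ioo a b),
        ← integral_Ioc_eq_integral_Ioo, ← intervalIntegral.integral_of_le hab.le,
        integral_smul_sub_average hq hψ.continuous]
      · exact integral_smul_sub_average_eq_zero hab hderiv hψ.continuous hψc
      · intro t ht
        rw [image_eq_zero_of_notMem_tsupport fun h => ht (hψs h), zero_smul]
  filter_upwards [hzero] with t ht htI
  rw [← sub_eq_zero.1 (ht htI), hq_def, sub_add_cancel]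

lemma hasDerivWithinAt_of_forall_eq_add_integral [CompleteSpace F] {u f φ : ℝ → F}
    (hφ : Continuous φ) (hf : ∀ᵐ t, t ∈ Ioo a b → f t = φ t)
    (hu : ∀ t ∈ Icc a b, u t = u a + ∫ s in a..t, f s) {t : ℝ} (ht : t ∈ Icc a b) :
    HasDerivWithinAt u (φ t) (Icc a b) t := by
  have hcongr : ∀ s ∈ Icc a b, u s = u a + ∫ r in a..s, φ r := by
    intro s hs
    rw [hu s hs]
    congr 1
    refine intervalIntegral.integral_congr_ae ?_
    filter_upwards [hf, measure_eq_zero_iff_ae_notMem.1 (measure_singleton b)] with r hr hrb hrs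
    rw [uIoc_of_le hs.1] at hrs
    exact hr ⟨hrs.1, (hrs.2.trans hs.2).lt_of_ne hrb⟩
  exact (((hφ.integral_hasStrictDerivAt a t).hasDerivAt.const_add (u a)).hasDerivWithinAt).congr
    hcongr (hcongr t ht)

/-! ### Smooth approximation of Lipschitz curves -/

lemma exists_continuous_integral_eq [CompleteSpace F] (hab : a < b) {w : ℝ → F}
    (hw : IntervalIntegrable w volume a b) {ε : ℝ} (hε : 0 < ε) :
    ∃ v : ℝ → F, Continuous v ∧ ∫ t in a..b, v t = ∫ t in a..b, w t ∧
      ∫ t in a..b, ‖v t - w t‖ ≤ ε := by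
  obtain ⟨φ, hφ, -⟩ := hw.1.exists_boundedContinuous_integral_sub_le (half_pos hε)
  rw [← intervalIntegral.integral_of_le hab.le] at hφ
  have hφi : IntervalIntegrable φ volume a b := φ.continuous.intervalIntegrable a b
  have hwφ : IntervalIntegrable (fun t => ‖w t - φ t‖) volume a b := (hw.sub hφi).norm
  set κ : F := (b - a)⁻¹ • ∫ t in a..b, (w t - φ t)
  have hκ_smul : (b - a) • κ = ∫ t in a..b, (w t - φ t) :=
    smul_inv_smul₀ (sub_pos.2 hab).ne' _
  have hκ_norm : (b - a) * ‖κ‖ ≤ ε / 2 := by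
    rw [← Real.norm_of_nonneg (sub_pos.2 hab).le, ← norm_smul, hκ_smul]
    exact (intervalIntegral.norm_integral_le_integral_norm hab.le).trans hφ
  refine ⟨fun t => φ t + κ, φ.continuous.add continuous_const, ?_, ?_⟩
  · rw [intervalIntegral.integral_add hφi (by simp), intervalIntegral.integral_const, hκ_smul,
      intervalIntegral.integral_sub hw hφi, add_sub_cancel]
  calc ∫ t in a..b, ‖φ t + κ - w t‖ ≤ ∫ t in a..b, (‖w t - φ t‖ + ‖κ‖) := by
        refine intervalIntegral.integral_mono_on hab.le
          ((hφi.add intervalIntegrable_const).sub hw).norm (hwφ.add (by simp)) fun t _ => ?_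
        rw [add_sub_right_comm, norm_sub_rev (w t)]
        exact norm_add_le _ _
    _ = (∫ t in a..b, ‖w t - φ t‖) + (b - a) * ‖κ‖ := by
        rw [intervalIntegral.integral_add hwφ (by simp), intervalIntegral.integral_const,
          smul_eq_mul]
    _ ≤ ε := by linarith

lemma intervalIntegrable_deriv_of_lipschitz [CompleteSpace F] [SecondCountableTopology F]
    {C : NNReal} {x : ℝ → F} (hx : LipschitzWith C x) :
    IntervalIntegrable (deriv x) volume a b :=
  intervalIntegrable_of_norm_le (stronglyMeasurable_deriv x).aestronglyMeasurable
    fun _ => norm_deriv_le_of_lipschitz hx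

lemma integral_deriv_of_lipschitz [FiniteDimensional ℝ F] {C : NNReal} {x : ℝ → F}
    (hx : LipschitzWith C x) : ∫ t in a..b, deriv x t = x b - x a := by
  have := FiniteDimensional.complete ℝ F
  refine integral_eq_sub_of_ae_hasDerivAt
    (hx.lipschitzOnWith (s := uIcc a b)).absolutelyContinuousOnInterval
    (intervalIntegrable_deriv_of_lipschitz hx) ?_
  filter_upwards [hx.ae_differentiableAt_real] with t ht _ using ht.hasDerivAt

theorem exists_contDiff_integral_norm_deriv_sub_le [FiniteDimensional ℝ F] (hab : a < b)
    {C : NNReal} {x : ℝ → F} (hx : LipschitzWith C x) {ε : ℝ} (hε : 0 < ε) :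
    ∃ y : ℝ → F, ContDiff ℝ 1 y ∧ y a = x a ∧ y b = x b ∧
      (∀ t ∈ Icc a b, ‖y t - x t‖ ≤ ε) ∧ ∫ t in a..b, ‖deriv y t - deriv x t‖ ≤ ε := by
  have := FiniteDimensional.complete ℝ F
  have hx' (c d : ℝ) : IntervalIntegrable (deriv x) volume c d :=
    intervalIntegrable_deriv_of_lipschitz hx
  obtain ⟨v, hv, hv_int, hv_le⟩ := exists_continuous_integral_eq hab (hx' a b) hε
  set y : ℝ → F := fun t => x a + ∫ s in a..t, v s with hy
  have hyd (t : ℝ) : HasDerivAt y (v t) t :=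
    (hv.integral_hasStrictDerivAt a t).hasDerivAt.const_add (x a)
  have hy' : deriv y = v := funext fun t => (hyd t).deriv
  refine ⟨y, contDiff_one_iff_deriv.2 ⟨fun t => (hyd t).differentiableAt, hy' ▸ hv⟩, by simp [hy],
    by simp [hy, hv_int, integral_deriv_of_lipschitz hx], fun t ht => ?_, hy' ▸ hv_le⟩
  have hyx : y t - x t = ∫ s in a..t, (v s - deriv x s) := by
    rw [intervalIntegral.integral_sub (hv.intervalIntegrable a t) (hx' a t),
      integral_deriv_of_lipschitz hx]
    simp only [hy]
    abel
  rw [hyx]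
  refine ((intervalIntegral.norm_integral_le_integral_norm ht.1).trans ?_).trans hv_le
  exact intervalIntegral.integral_mono_interval le_rfl ht.1 ht.2
    (Eventually.of_forall fun _ => norm_nonneg _)
    ((hv.intervalIntegrable a b).sub (hx' a b)).norm

/-! ### Differentiation under the integral sign -/

lemma hasDerivAt_integral_comp_add_smul {E : Type*} [NormedAddCommGroup E] [NormedSpace ℝ E]
    [FiniteDimensional ℝ E] {Φ : E → ℝ} (hΦ : ContDiff ℝ 1 Φ) {u v : ℝ → E}
    (hu : AEStronglyMeasurable u volume) (hv : AEStronglyMeasurable v volume) {M : ℝ}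
    (huM : ∀ t ∈ uIcc a b, ‖u t‖ ≤ M) (hvM : ∀ t ∈ uIcc a b, ‖v t‖ ≤ M) :
    HasDerivAt (fun ε : ℝ => ∫ t in a..b, Φ (u t + ε • v t))
      (∫ t in a..b, fderiv ℝ Φ (u t) (v t)) 0 := by
  have := FiniteDimensional.proper ℝ E
  have hΦ' : Continuous fun p : E × E => fderiv ℝ Φ p.1 p.2 :=
    ((hΦ.continuous_fderiv one_ne_zero).comp continuous_fst).clm_apply continuous_snd
  have hcomp (ε : ℝ) : AEStronglyMeasurable (fun t => Φ (u t + ε • v t)) volume :=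
    hΦ.continuous.comp_aestronglyMeasurable (hu.add (hv.const_smul ε))
  obtain ⟨D₀, hD₀⟩ := (isCompact_closedBall (0 : E) M).exists_bound_of_continuousOn
    hΦ.continuous.continuousOn
  obtain ⟨D, hD⟩ := ((isCompact_closedBall (0 : E) (M + M)).prod
    (isCompact_closedBall (0 : E) M)).exists_bound_of_continuousOn hΦ'.continuousOn
  have hint : IntervalIntegrable (fun t => Φ (u t)) volume a b := by
    refine (intervalIntegrable_const (c := D₀)).mono_fun'
      (hΦ.continuous.comp_aestronglyMeasurable hu).restrict ?_
    filter_upwards [ae_restrict_mem measurableSet_uIoc] with t ht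
    exact hD₀ _ (mem_closedBall_zero_iff.2 (huM t (uIoc_subset_uIcc ht)))
  have hder := intervalIntegral.hasDerivAt_integral_of_dominated_loc_of_deriv_le
    (μ := volume) (a := a) (b := b) (x₀ := (0 : ℝ)) (s := Metric.ball 0 1) (bound := fun _ => D)
    (F := fun ε t => Φ (u t + ε • v t)) (F' := fun ε t => fderiv ℝ Φ (u t + ε • v t) (v t))
    (Metric.ball_mem_nhds 0 one_pos) (Eventually.of_forall fun ε => (hcomp ε).restrict)
    (by simpa using hint)
    (by simpa using (hΦ'.comp_aestronglyMeasurable (hu.prodMk hv)).restrict)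
    (Eventually.of_forall fun t ht ε hε => hD (u t + ε • v t, v t) ?_) (by simp)
    (Eventually.of_forall fun t _ ε _ => ?_)
  · simpa using hder.2
  · have hut := huM t (uIoc_subset_uIcc ht)
    have hvt := hvM t (uIoc_subset_uIcc ht)
    have hε1 : ‖ε‖ ≤ 1 := (mem_ball_zero_iff.1 hε).le
    refine ⟨mem_closedBall_zero_iff.2 ?_, mem_closedBall_zero_iff.2 hvt⟩
    calc ‖u t + ε • v t‖ ≤ ‖u t‖ + ‖ε‖ * ‖v t‖ := by grw [norm_add_le, norm_smul]
      _ ≤ M + 1 * M := by gcongr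
      _ = M + M := by rw [one_mul]
  · have hline : HasDerivAt (fun ε : ℝ => u t + ε • v t) (v t) ε := by
      simpa using ((hasDerivAt_id ε).smul_const (v t)).const_add (u t)
    exact (hΦ.differentiable one_ne_zero _).hasFDerivAt.comp_hasDerivAt ε hline

end Integration

/-! ### Metrics uniformly equivalent to the Euclidean one -/

/-- A field of bilinear forms on `ℝⁿ`. Its values are continuous bilinear maps, so that regularity
in the base point can be expressed by `ContDiff`. -/
abbrev BilinField (n : ℕ) : Type := En n → En n →L[ℝ] En n →L[ℝ] ℝ

/-- The metric tensor underlying a field of bilinear forms. -/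
noncomputable def BilinField.toMetric {n : ℕ} (B : BilinField n) : MetricTensor n :=
  fun x v w => B x v w

/-- A `C²` Riemannian metric on `ℝⁿ` that is uniformly equivalent to the Euclidean one, with
constants `k` and `K`. -/
structure IsUniformlyEuclidean {n : ℕ} (B : BilinField n) (k K : ℝ) : Prop where
  contDiff : ContDiff ℝ 2 B
  symm : ∀ x v w, B x v w = B x w v
  k_pos : 0 < k
  K_pos : 0 < K
  lower : ∀ x v, (k * ‖v‖) ^ 2 ≤ B x v v
  upper : ∀ x v, B x v v ≤ (K * ‖v‖) ^ 2

namespace IsUniformlyEuclidean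

variable {n : ℕ} {B : BilinField n} {k K : ℝ}

lemma nonneg (hB : IsUniformlyEuclidean B k K) (x v : En n) : 0 ≤ B x v v :=
  (sq_nonneg _).trans (hB.lower x v)

lemma mul_norm_le_sqrt (hB : IsUniformlyEuclidean B k K) (x v : En n) : k * ‖v‖ ≤ √(B x v v) :=
  Real.le_sqrt_of_sq_le (hB.lower x v)

lemma sqrt_le_mul_norm (hB : IsUniformlyEuclidean B k K) (x v : En n) : √(B x v v) ≤ K * ‖v‖ :=
  Real.sqrt_le_iff.2 ⟨mul_nonneg hB.K_pos.le (norm_nonneg _), hB.upper x v⟩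

lemma le_sqrt_mul_sqrt (hB : IsUniformlyEuclidean B k K) (x v w : En n) :
    B x v w ≤ √(B x v v) * √(B x w w) := by
  rw [← Real.sqrt_mul (hB.nonneg x v)]
  apply Real.le_sqrt_of_sq_le
  have hquad (s : ℝ) : 0 ≤ B x w w * (s * s) + 2 * B x v w * s + B x v v := by
    have := hB.nonneg x (v + s • w)
    simp only [map_add, map_smul, add_apply, smul_apply, smul_eq_mul, hB.symm x w v] at this
    linarith
  have := discrim_le_zero hquad
  unfold discrim at this
  nlinarith

lemma sqrt_add_le (hB : IsUniformlyEuclidean B k K) (x v w : En n) :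
    √(B x (v + w) (v + w)) ≤ √(B x v v) + √(B x w w) := by
  rw [Real.sqrt_le_left (by positivity)]
  have hcs := hB.le_sqrt_mul_sqrt x v w
  have hv := Real.sq_sqrt (hB.nonneg x v)
  have hw := Real.sq_sqrt (hB.nonneg x w)
  simp only [map_add, add_apply, hB.symm x w v]
  nlinarith

lemma continuous (hB : IsUniformlyEuclidean B k K) : Continuous B := hB.contDiff.continuous

end IsUniformlyEuclidean

/-! ### Length and distance -/

section Length

variable {n : ℕ} {B : BilinField n} {k K : ℝ} {c : ℝ → En n} {a b : ℝ}

lemma intervalIntegrable_speed (hB : Continuous B) (hc : ContDiff ℝ 1 c) :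
    IntervalIntegrable (fun t => √(B (c t) (deriv c t) (deriv c t))) MeasureTheory.volume a b := by
  have hc' : Continuous (deriv c) := hc.continuous_deriv le_rfl
  exact (((hB.comp hc.continuous).clm_apply hc').clm_apply hc').sqrt.intervalIntegrable a b

lemma clen_nonneg (G : MetricTensor n) (c : ℝ → En n) (hab : a ≤ b) : 0 ≤ clen G c a b :=
  intervalIntegral.integral_nonneg hab fun _ _ => Real.sqrt_nonneg _

lemma clen_comp_add_mul (B : BilinField n) (hc : Differentiable ℝ c) (hab : a ≤ b) :
    clen B.toMetric (fun s => c (a + (b - a) * s)) 0 1 = clen B.toMetric c a b := by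
  have hderiv (s : ℝ) :
      deriv (fun s => c (a + (b - a) * s)) s = (b - a) • deriv c (a + (b - a) * s) := by
    have hline : HasDerivAt (fun s : ℝ => a + (b - a) * s) (b - a) s := by
      simpa using ((hasDerivAt_id s).const_mul (b - a)).const_add a
    exact ((hc _).hasDerivAt.scomp s hline).deriv
  have hsqrt (t : ℝ) : √((b - a) * ((b - a) * t)) = (b - a) * √t := by
    rw [← mul_assoc, Real.sqrt_mul (by positivity), Real.sqrt_mul_self (by linarith)]
  simp only [clen, BilinField.toMetric, hderiv, map_smul, smul_apply, smul_eq_mul, hsqrt,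
    intervalIntegral.integral_const_mul]
  simpa using intervalIntegral.mul_integral_comp_add_mul (a := 0) (b := 1)
    (f := fun t => √(B (c t) (deriv c t) (deriv c t))) (b - a) a

lemma rdist_le_clen (B : BilinField n) (hc : ContDiff ℝ 1 c) (hab : a ≤ b) :
    rdist B.toMetric (c a) (c b) ≤ clen B.toMetric c a b := by
  rw [← clen_comp_add_mul B (hc.differentiable one_ne_zero) hab]
  refine csInf_le ⟨0, ?_⟩ ⟨_, by fun_prop, by simp, by simp, rfl⟩
  rintro _ ⟨c, -, -, -, rfl⟩
  exact clen_nonneg _ c zero_le_one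

lemma exists_clen_lt (G : MetricTensor n) {x y : En n} {L : ℝ} (h : rdist G x y < L) :
    ∃ c : ℝ → En n, ContDiff ℝ 1 c ∧ c 0 = x ∧ c 1 = y ∧ clen G c 0 1 < L := by
  obtain ⟨_, ⟨c, hc, h0, h1, rfl⟩, hlt⟩ := exists_lt_of_csInf_lt
    (s := {L : ℝ | ∃ γ : ℝ → En n, ContDiff ℝ 1 γ ∧ γ 0 = x ∧ γ 1 = y ∧ L = clen G γ 0 1})
    ⟨_, fun s => x + s • (y - x), by fun_prop, by simp, by simp, rfl⟩ h
  exact ⟨c, hc, h0, h1, hlt⟩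

namespace IsUniformlyEuclidean

lemma mul_norm_sub_le_clen (hB : IsUniformlyEuclidean B k K) (hc : ContDiff ℝ 1 c) (hab : a ≤ b) :
    k * ‖c b - c a‖ ≤ clen B.toMetric c a b := by
  have hc' : Continuous (deriv c) := hc.continuous_deriv le_rfl
  rw [← intervalIntegral.integral_deriv_eq_sub
    (fun t _ => (hc.differentiable one_ne_zero).differentiableAt) (hc'.intervalIntegrable a b)]
  calc k * ‖∫ t in a..b, deriv c t‖ ≤ k * ∫ t in a..b, ‖deriv c t‖ :=
        mul_le_mul_of_nonneg_left (intervalIntegral.norm_integral_le_integral_norm hab) hB.k_pos.le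
    _ = ∫ t in a..b, k * ‖deriv c t‖ := (intervalIntegral.integral_const_mul _ _).symm
    _ ≤ clen B.toMetric c a b := intervalIntegral.integral_mono_on hab
        ((hc'.norm.const_smul k).intervalIntegrable a b)
        (intervalIntegrable_speed hB.continuous hc) fun t _ => hB.mul_norm_le_sqrt _ _

lemma mul_norm_sub_le_rdist (hB : IsUniformlyEuclidean B k K) (x y : En n) :
    k * ‖y - x‖ ≤ rdist B.toMetric x y := by
  refine le_of_forall_gt fun L hL => ?_
  obtain ⟨c, hc, rfl, rfl, hlt⟩ := exists_clen_lt _ hL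
  exact (hB.mul_norm_sub_le_clen hc zero_le_one).trans_lt hlt

lemma sqrt_le_mul_clen (hB : IsUniformlyEuclidean B k K) (hc : ContDiff ℝ 1 c) (hab : a ≤ b)
    (x : En n) {κ : ℝ} (hκ : 0 ≤ κ)
    (h : ∀ t ∈ Icc a b,
      √(B x (deriv c t) (deriv c t)) ≤ κ * √(B (c t) (deriv c t) (deriv c t))) :
    √(B x (c b - c a) (c b - c a)) ≤ κ * clen B.toMetric c a b := by
  set N := √(B x (c b - c a) (c b - c a))
  obtain hN0 | hN0 := (Real.sqrt_nonneg _ : 0 ≤ N).eq_or_lt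
  · exact hN0.symm.trans_le (mul_nonneg hκ (clen_nonneg _ c hab))
  have hc' : Continuous (deriv c) := hc.continuous_deriv le_rfl
  have hLc : IntervalIntegrable (fun t => B x (c b - c a) (deriv c t)) MeasureTheory.volume a b :=
    ((B x (c b - c a)).continuous.comp hc').intervalIntegrable a b
  refine le_of_mul_le_mul_left ?_ hN0
  calc N * N = B x (c b - c a) (c b - c a) := Real.mul_self_sqrt (hB.nonneg _ _)
    _ = ∫ t in a..b, B x (c b - c a) (deriv c t) := by
        rw [intervalIntegral.integral_eq_sub_of_hasDerivAt (fun t _ =>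
          (B x (c b - c a)).hasFDerivAt.comp_hasDerivAt t
            (hc.differentiable one_ne_zero t).hasDerivAt) hLc, map_sub (B x _) (c b)]
        rfl
    _ ≤ ∫ t in a..b, N * (κ * √(B (c t) (deriv c t) (deriv c t))) := by
        refine intervalIntegral.integral_mono_on hab hLc
          (((intervalIntegrable_speed hB.continuous hc).const_mul κ).const_mul N) fun t ht => ?_
        grw [hB.le_sqrt_mul_sqrt, h t ht]
    _ = N * (κ * clen B.toMetric c a b) := by
        rw [intervalIntegral.integral_const_mul, intervalIntegral.integral_const_mul]
        rfl

lemma eventually_forall_sqrt_le (hB : IsUniformlyEuclidean B k K) (x : En n) {ε : ℝ} (hε : 0 < ε) :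
    ∀ᶠ z in nhds x, ∀ v, √(B x v v) ≤ (1 + ε) * √(B z v v) := by
  have hk := hB.k_pos
  filter_upwards [hB.continuous.continuousAt.eventually
    (Metric.ball_mem_nhds (B x) (by positivity : 0 < k ^ 2 * ε))] with z hz v
  replace hz : ‖B z - B x‖ < k ^ 2 * ε := (dist_eq_norm (B z) (B x)).symm.trans_lt hz
  have hdiff : |B z v v - B x v v| ≤ k ^ 2 * ε * ‖v‖ * ‖v‖ :=
    ((B z - B x).le_opNorm₂ v v).trans (by gcongr)
  have hlower := hB.lower z v
  have hsq := Real.sq_sqrt (hB.nonneg z v)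
  refine Real.sqrt_le_iff.2 ⟨by positivity, ?_⟩
  have hBx : B x v v ≤ (1 + ε) * B z v v := by nlinarith [(abs_le.1 hdiff).1]
  grw [hBx, mul_pow, hsq]
  nlinarith [mul_nonneg (mul_nonneg hε.le (by positivity : 0 ≤ 1 + ε)) (hB.nonneg z v)]

/- A curve of length less than `k * δ` stays in the Euclidean ball of radius `δ` around its starting
point, where the metric varies little. -/
theorem exists_forall_sqrt_le_rdist (hB : IsUniformlyEuclidean B k K) (x : En n) {ε : ℝ}
    (hε : 0 < ε) :
    ∃ ρ > 0, ∀ y, rdist B.toMetric x y < ρ →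
      √(B x (y - x) (y - x)) ≤ (1 + ε) * rdist B.toMetric x y := by
  obtain ⟨δ, hδ, hball⟩ := Metric.eventually_nhds_iff.1 (hB.eventually_forall_sqrt_le x hε)
  refine ⟨k * δ, mul_pos hB.k_pos hδ, fun y hy => ?_⟩
  rw [← div_le_iff₀' (by positivity)]
  refine le_of_forall_gt_imp_ge_of_dense fun L hL => ?_
  obtain ⟨c, hc, rfl, rfl, hlt⟩ := exists_clen_lt _ (lt_min hL hy)
  have hstay : ∀ t ∈ Icc (0 : ℝ) 1, dist (c t) (c 0) < δ := by
    intro t ht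
    have hsub : clen B.toMetric c 0 t ≤ clen B.toMetric c 0 1 :=
      intervalIntegral.integral_mono_interval le_rfl ht.1 ht.2
        (Eventually.of_forall fun _ => Real.sqrt_nonneg _)
        (intervalIntegrable_speed hB.continuous hc)
    rw [dist_eq_norm]
    refine lt_of_mul_lt_mul_left ?_ hB.k_pos.le
    exact ((hB.mul_norm_sub_le_clen hc ht.1).trans hsub).trans_lt (hlt.trans_le (min_le_right _ _))
  rw [div_le_iff₀' (by positivity)]
  have hsqrt := hB.sqrt_le_mul_clen hc zero_le_one (c 0) (κ := 1 + ε) (by positivity)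
    fun t ht => hball (hstay t ht) _
  grw [hsqrt, hlt, min_le_left]

/-! ### Distance and energy -/

lemma two_mul_sqrt_le (hB : IsUniformlyEuclidean B k K) {Λ : NNReal} {s : Set (En n)}
    (hΛ : LipschitzOnWith Λ B s) {x y : En n} (hx : x ∈ s) (hy : y ∈ s) (v w : En n) :
    2 * √(B y v v) ≤ B x w w + 1 + (Λ * ‖y - x‖ * ‖w‖ * ‖w‖ + 2 * K * ‖v - w‖) := by
  have htri : √(B y v v) ≤ √(B y w w) + K * ‖v - w‖ := by
    simpa only [add_sub_cancel] using
      (hB.sqrt_add_le y w (v - w)).trans (add_le_add_right (hB.sqrt_le_mul_norm _ _) _)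
  have hamgm : 2 * √(B y w w) ≤ B y w w + 1 := by
    nlinarith [sq_nonneg (√(B y w w) - 1), Real.sq_sqrt (hB.nonneg y w)]
  have hbase : B y w w - B x w w ≤ Λ * ‖y - x‖ * ‖w‖ * ‖w‖ :=
    (Real.le_norm_self _).trans <| ((B y - B x).le_opNorm₂ w w).trans <| by
      grw [hΛ.norm_sub_le hy hx]
  linarith

lemma intervalIntegrable_energy (hB : IsUniformlyEuclidean B k K) {C : NNReal} {x : ℝ → En n}
    (hx : LipschitzWith C x) :
    IntervalIntegrable (fun t => B (x t) (deriv x t) (deriv x t)) MeasureTheory.volume a b :=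
  intervalIntegrable_comp_deriv (Φ := fun p : En n × En n => B p.1 p.2 p.2)
    (((hB.continuous.comp continuous_fst).clm_apply continuous_snd).clm_apply continuous_snd) hx

lemma two_mul_clen_le (hB : IsUniformlyEuclidean B k K) (hab : a ≤ b) {Λ C : NNReal}
    {s : Set (En n)} (hΛ : LipschitzOnWith Λ B s) {x y : ℝ → En n} (hx : LipschitzWith C x)
    (hy : ContDiff ℝ 1 y) (hxs : ∀ t ∈ Icc a b, x t ∈ s) (hys : ∀ t ∈ Icc a b, y t ∈ s) {δ : ℝ}
    (hyx : ∀ t ∈ Icc a b, ‖y t - x t‖ ≤ δ) :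
    2 * clen B.toMetric y a b ≤ cenergy B.toMetric x a b + (b - a) +
      ((b - a) * (Λ * δ * C * C) + 2 * K * ∫ t in a..b, ‖deriv y t - deriv x t‖) := by
  have hpoint : ∀ t ∈ Icc a b, 2 * √(B (y t) (deriv y t) (deriv y t)) ≤
      B (x t) (deriv x t) (deriv x t) + 1 + (Λ * δ * C * C + 2 * K * ‖deriv y t - deriv x t‖) := by
    intro t ht
    have hw := norm_deriv_le_of_lipschitz (x₀ := t) hx
    have hδ : 0 ≤ δ := (norm_nonneg _).trans (hyx t ht)
    refine (hB.two_mul_sqrt_le hΛ (hxs t ht) (hys t ht) _ (deriv x t)).trans ?_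
    gcongr
    exact hyx t ht
  have hdiff : IntervalIntegrable (fun t => ‖deriv y t - deriv x t‖) MeasureTheory.volume a b :=
    ((hy.continuous_deriv le_rfl).intervalIntegrable a b).sub
      (intervalIntegrable_deriv_of_lipschitz hx) |>.norm
  have henergy := (hB.intervalIntegrable_energy (a := a) (b := b) hx).add
    (intervalIntegrable_const (c := (1 : ℝ)))
  have herror := (intervalIntegrable_const (c := Λ * δ * C * C)).add (hdiff.const_mul (2 * K))
  calc 2 * clen B.toMetric y a b = ∫ t in a..b, 2 * √(B (y t) (deriv y t) (deriv y t)) :=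
        (intervalIntegral.integral_const_mul _ _).symm
    _ ≤ _ := intervalIntegral.integral_mono_on hab
        ((intervalIntegrable_speed hB.continuous hy).const_mul 2) (henergy.add herror) hpoint
    _ = _ := by
        rw [intervalIntegral.integral_add henergy herror, intervalIntegral.integral_add
          (hB.intervalIntegrable_energy hx) (by simp), intervalIntegral.integral_add (by simp)
          (hdiff.const_mul (2 * K)), intervalIntegral.integral_const_mul (2 * K),
          intervalIntegral.integral_const, intervalIntegral.integral_const, smul_eq_mul,
          smul_eq_mul, mul_one]
        rfl

lemma exists_forall_two_mul_rdist_le (hB : IsUniformlyEuclidean B k K) (hab : a < b) {C : NNReal}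
    {x : ℝ → En n} (hx : LipschitzWith C x) :
    ∃ Q, ∀ δ ∈ Ioc (0 : ℝ) 1, 2 * rdist B.toMetric (x a) (x b) ≤
      cenergy B.toMetric x a b + (b - a) + Q * δ := by
  obtain ⟨Λ, hΛ⟩ := (hB.contDiff.contDiffOn (s := Metric.closedBall (x a) (C * (b - a) + 1))
    ).exists_lipschitzOnWith two_ne_zero (convex_closedBall _ _) (isCompact_closedBall _ _)
  refine ⟨(b - a) * (Λ * C * C) + 2 * K, fun δ hδ => ?_⟩
  obtain ⟨y, hy, hya, hyb, hyx, hy'⟩ := exists_contDiff_integral_norm_deriv_sub_le hab hx hδ.1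
  have hx_norm : ∀ t ∈ Icc a b, ‖x t - x a‖ ≤ C * (b - a) := by
    intro t ht
    grw [hx.norm_sub_le, Real.norm_of_nonneg (sub_nonneg.2 ht.1), ht.2]
  have hx_mem : ∀ t ∈ Icc a b, x t ∈ Metric.closedBall (x a) (C * (b - a) + 1) := fun t ht =>
    mem_closedBall_iff_norm.2 ((hx_norm t ht).trans (by linarith))
  have hy_mem : ∀ t ∈ Icc a b, y t ∈ Metric.closedBall (x a) (C * (b - a) + 1) := by
    intro t ht
    rw [mem_closedBall_iff_norm, ← sub_add_sub_cancel (y t) (x t)]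
    grw [norm_add_le, hyx t ht, hx_norm t ht, hδ.2, add_comm]
  have hK := hB.K_pos
  have hlen := hB.two_mul_clen_le hab.le hΛ hx hy hx_mem hy_mem hyx
  have hdist := rdist_le_clen B hy hab.le
  rw [hya, hyb] at hdist
  grw [hdist, hlen, hy']
  linarith

theorem two_mul_rdist_le_cenergy_add (hB : IsUniformlyEuclidean B k K) (hab : a < b) {C : NNReal}
    {x : ℝ → En n} (hx : LipschitzWith C x) :
    2 * rdist B.toMetric (x a) (x b) ≤ cenergy B.toMetric x a b + (b - a) := by
  obtain ⟨Q, hQ⟩ := hB.exists_forall_two_mul_rdist_le hab hx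
  have hlim : Tendsto (fun δ => cenergy B.toMetric x a b + (b - a) + Q * δ) (nhdsWithin 0 (Ioi 0))
      (nhds (cenergy B.toMetric x a b + (b - a))) := by
    refine tendsto_nhdsWithin_of_tendsto_nhds (Continuous.tendsto' (by fun_prop) _ _ (by simp))
  refine ge_of_tendsto hlim ?_
  filter_upwards [Ioc_mem_nhdsGT one_pos] with δ hδ using hQ δ hδ

end IsUniformlyEuclidean

end Length

/-! ### The energy functional -/

lemma contDiff_fderiv_apply_apply {E F G H : Type*} [NormedAddCommGroup E] [NormedSpace ℝ E]
    [NormedAddCommGroup F] [NormedSpace ℝ F] [NormedAddCommGroup G] [NormedSpace ℝ G]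
    [NormedAddCommGroup H] [NormedSpace ℝ H] {f : E → F →L[ℝ] G →L[ℝ] H} (hf : ContDiff ℝ 2 f) :
    ContDiff ℝ 1 (fun p : E × E × F × G => fderiv ℝ f p.1 p.2.1 p.2.2.1 p.2.2.2) := by
  have := hf.fderiv_right (m := 1) (by norm_num)
  fun_prop

/-- The covector `w ↦ ½ (∂_w B)(v, v)`, the right-hand side of the geodesic equation in momentum
form. -/
noncomputable def BilinField.force {n : ℕ} (B : BilinField n) (x v : En n) : En n →L[ℝ] ℝ :=
  (1 / 2 : ℝ) • ((fderiv ℝ B x).flip v).flip v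

lemma BilinField.force_apply {n : ℕ} (B : BilinField n) (x v w : En n) :
    B.force x v w = 1 / 2 * fderiv ℝ B x w v v := rfl

namespace IsUniformlyEuclidean

variable {n : ℕ} {B : BilinField n} {k K : ℝ}

lemma contDiff_force (hB : IsUniformlyEuclidean B k K) :
    ContDiff ℝ 1 (fun p : En n × En n => B.force p.1 p.2) := by
  rw [contDiff_clm_apply_iff]
  intro w
  have hpoint : ContDiff ℝ 1 (fun p : En n × En n => fderiv ℝ B p.1 w p.2 p.2) :=
    (contDiff_fderiv_apply_apply hB.contDiff).comp (f := fun p : En n × En n => (p.1, w, p.2, p.2))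
      (by fun_prop)
  exact contDiff_const.mul hpoint

lemma contDiff_energyDensity (hB : IsUniformlyEuclidean B k K) :
    ContDiff ℝ 1 (fun p : En n × En n => B p.1 p.2 p.2) :=
  (((hB.contDiff.of_le one_le_two).comp contDiff_fst).clm_apply contDiff_snd).clm_apply contDiff_snd

lemma fderiv_energyDensity (hB : IsUniformlyEuclidean B k K) (p q : En n × En n) :
    fderiv ℝ (fun p : En n × En n => B p.1 p.2 p.2) p q =
      2 * (B.force p.1 p.2 q.1 + B p.1 p.2 q.2) := by
  have hbase := (hB.contDiff.differentiable two_ne_zero p.1).hasFDerivAt.comp p hasFDerivAt_fst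
  have hderiv := (hbase.clm_apply hasFDerivAt_snd).clm_apply hasFDerivAt_snd
  refine (DFunLike.congr_fun hderiv.fderiv q).trans ?_
  simp [BilinField.force_apply, hB.symm p.1 q.2]
  ring

end IsUniformlyEuclidean

lemma cenergy_add_smul {n : ℕ} (B : BilinField n) {γ V : ℝ → En n} {C D : NNReal}
    (hγ : LipschitzWith C γ) (hV : LipschitzWith D V) (a b ε : ℝ) :
    cenergy B.toMetric (fun t => γ t + ε • V t) a b =
      ∫ t in a..b, B (γ t + ε • V t) (deriv γ t + ε • deriv V t) (deriv γ t + ε • deriv V t) := by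
  refine intervalIntegral.integral_congr_ae ?_
  filter_upwards [hγ.ae_differentiableAt_real, hV.ae_differentiableAt_real] with t hγt hVt _
  rw [(hγt.hasDerivAt.fun_add (hVt.hasDerivAt.fun_const_smul ε)).deriv]
  rfl

/-! ### Isometric curves: speed and first variation -/

/-- The curve `γ` is an isometric embedding of the parameter set `I` for the distance `d`. -/
def IsIsometricOn {n : ℕ} (d : En n → En n → ℝ) (γ : ℝ → En n) (I : Set ℝ) : Prop :=
  ∀ s ∈ I, ∀ u ∈ I, d (γ s) (γ u) = |s - u|

namespace IsIsometricOn

open MeasureTheory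

variable {n : ℕ} {B : BilinField n} {k K : ℝ} {γ : ℝ → En n} {I : Set ℝ} {a b : ℝ}

lemma congr {d : En n → En n → ℝ} {γ₁ : ℝ → En n} (h : IsIsometricOn d γ I)
    (hγ : EqOn γ₁ γ I) : IsIsometricOn d γ₁ I := by
  intro s hs u hu
  rw [hγ hs, hγ hu, h s hs u hu]

lemma lipschitzOnWith (h : IsIsometricOn (rdist B.toMetric) γ I)
    (hB : IsUniformlyEuclidean B k K) : LipschitzOnWith k⁻¹.toNNReal γ I := by
  refine LipschitzOnWith.of_dist_le_mul fun s hs u hu => ?_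
  rw [Real.coe_toNNReal _ (inv_nonneg.2 hB.k_pos.le), dist_eq_norm', le_inv_mul_iff₀ hB.k_pos]
  exact (hB.mul_norm_sub_le_rdist _ _).trans_eq (h s hs u hu)

lemma sqrt_deriv_le (h : IsIsometricOn (rdist B.toMetric) γ I)
    (hB : IsUniformlyEuclidean B k K) {t : ℝ} (hI : I ∈ nhds t) (hγ : DifferentiableAt ℝ γ t)
    {ε : ℝ} (hε : 0 < ε) : √(B (γ t) (deriv γ t) (deriv γ t)) ≤ 1 + ε := by
  obtain ⟨ρ, hρ, hdist⟩ := hB.exists_forall_sqrt_le_rdist (γ t) hε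
  have hcont : Continuous fun v : En n => √(B (γ t) v v) := by fun_prop
  refine le_of_tendsto ((hcont.tendsto _).comp hγ.hasDerivAt.tendsto_slope) ?_
  filter_upwards [nhdsWithin_le_nhds hI, nhdsWithin_le_nhds (Metric.ball_mem_nhds t hρ),
    self_mem_nhdsWithin] with s hs hsρ hst
  have hd : rdist B.toMetric (γ t) (γ s) = |s - t| := by
    rw [h t (mem_of_mem_nhds hI) s hs, abs_sub_comm]
  have hle := hdist (γ s) (hd.trans_lt hsρ)
  have hslope : B (γ t) (slope γ t s) (slope γ t s) =
      ((s - t)⁻¹) ^ 2 * B (γ t) (γ s - γ t) (γ s - γ t) := by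
    simp only [slope, vsub_eq_sub, map_smul, smul_apply, smul_eq_mul]
    ring
  rw [Function.comp_apply, hslope, Real.sqrt_mul (sq_nonneg _), Real.sqrt_sq_eq_abs, abs_inv,
    inv_mul_le_iff₀ (abs_pos.2 (sub_ne_zero.2 hst)), mul_comm, ← hd]
  exact hle

lemma apply_deriv_le_one (h : IsIsometricOn (rdist B.toMetric) γ I)
    (hB : IsUniformlyEuclidean B k K) {t : ℝ} (hI : I ∈ nhds t) (hγ : DifferentiableAt ℝ γ t) :
    B (γ t) (deriv γ t) (deriv γ t) ≤ 1 :=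
  Real.sqrt_le_one.1 (le_of_forall_pos_le_add fun _ hε => h.sqrt_deriv_le hB hI hγ hε)

lemma ae_apply_deriv_le_one (h : IsIsometricOn (rdist B.toMetric) γ (Icc a b))
    (hB : IsUniformlyEuclidean B k K) {C : NNReal} (hγ : LipschitzWith C γ) :
    ∀ᵐ t ∂volume.restrict (Icc a b), B (γ t) (deriv γ t) (deriv γ t) ≤ 1 := by
  rw [← Measure.restrict_congr_set Ioo_ae_eq_Icc, ae_restrict_iff' measurableSet_Ioo]
  filter_upwards [hγ.ae_differentiableAt_real] with t ht htI
  exact h.apply_deriv_le_one hB (Icc_mem_nhds htI.1 htI.2) ht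

lemma sub_le_cenergy (h : IsIsometricOn (rdist B.toMetric) γ (Icc a b))
    (hB : IsUniformlyEuclidean B k K) (hab : a < b) {C : NNReal} {x : ℝ → En n}
    (hx : LipschitzWith C x) (ha : x a = γ a) (hb : x b = γ b) :
    b - a ≤ cenergy B.toMetric x a b := by
  have hd := hB.two_mul_rdist_le_cenergy_add hab hx
  rw [ha, hb, h a (left_mem_Icc.2 hab.le) b (right_mem_Icc.2 hab.le), abs_sub_comm,
    abs_of_pos (sub_pos.2 hab)] at hd
  linarith

lemma cenergy_eq (h : IsIsometricOn (rdist B.toMetric) γ (Icc a b))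
    (hB : IsUniformlyEuclidean B k K) (hab : a < b) {C : NNReal} (hγ : LipschitzWith C γ) :
    cenergy B.toMetric γ a b = b - a := by
  refine le_antisymm ?_ (h.sub_le_cenergy hB hab hγ rfl rfl)
  have hle := intervalIntegral.integral_mono_ae_restrict hab.le (hB.intervalIntegrable_energy hγ)
    (intervalIntegrable_const (c := (1 : ℝ))) (h.ae_apply_deriv_le_one hB hγ)
  rwa [intervalIntegral.integral_const, smul_eq_mul, mul_one] at hle

lemma ae_apply_deriv_eq_one (h : IsIsometricOn (rdist B.toMetric) γ (Icc a b))
    (hB : IsUniformlyEuclidean B k K) (hab : a < b) {C : NNReal} (hγ : LipschitzWith C γ) :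
    ∀ᵐ t ∂volume.restrict (Icc a b), B (γ t) (deriv γ t) (deriv γ t) = 1 := by
  have hint := hB.intervalIntegrable_energy (a := a) (b := b) hγ
  have hzero : ∫ t in a..b, (1 - B (γ t) (deriv γ t) (deriv γ t)) = 0 := by
    rw [intervalIntegral.integral_sub intervalIntegrable_const hint,
      intervalIntegral.integral_const, smul_eq_mul, mul_one, sub_eq_zero]
    exact (h.cenergy_eq hB hab hγ).symm
  have hnonneg := h.ae_apply_deriv_le_one hB hγ
  rw [Measure.restrict_congr_set Ioc_ae_eq_Icc.symm] at hnonneg ⊢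
  filter_upwards [(intervalIntegral.integral_eq_zero_iff_of_le_of_nonneg_ae hab.le
    (hnonneg.mono fun _ => sub_nonneg.2) (intervalIntegrable_const.sub hint)).1 hzero] with t ht
  exact (sub_eq_zero.1 ht).symm

/- `γ + ε V` joins the same points as `γ`, so that its energy is minimal at `ε = 0`. -/
theorem integral_force_add_momentum_eq_zero (h : IsIsometricOn (rdist B.toMetric) γ (Icc a b))
    (hB : IsUniformlyEuclidean B k K) (hab : a < b) {C D : NNReal} (hγ : LipschitzWith C γ)
    {V : ℝ → En n} (hV : LipschitzWith D V) (hVa : V a = 0) (hVb : V b = 0) :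
    ∫ t in a..b, (B.force (γ t) (deriv γ t) (V t) + B (γ t) (deriv γ t) (deriv V t)) = 0 := by
  have hmin : IsLocalMin (fun ε : ℝ => cenergy B.toMetric (fun t => γ t + ε • V t) a b) 0 := by
    refine Eventually.of_forall fun ε => ?_
    simp only [zero_smul, add_zero, h.cenergy_eq hB hab hγ]
    exact h.sub_le_cenergy hB hab (hγ.add ((lipschitzWith_smul ε).comp hV)) (by simp [hVa])
      (by simp [hVb])
  obtain ⟨Mγ, hMγ⟩ := (isCompact_uIcc (a := a) (b := b)).exists_bound_of_continuousOn
    hγ.continuous.continuousOn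
  obtain ⟨MV, hMV⟩ := (isCompact_uIcc (a := a) (b := b)).exists_bound_of_continuousOn
    hV.continuous.continuousOn
  have hmeas {x : ℝ → En n} {C : NNReal} (hx : LipschitzWith C x) :
      AEStronglyMeasurable (fun t => (x t, deriv x t)) volume :=
    hx.continuous.aestronglyMeasurable.prodMk (stronglyMeasurable_deriv x).aestronglyMeasurable
  have hderiv := hasDerivAt_integral_comp_add_smul (a := a) (b := b)
    (M := max (max Mγ C) (max MV D)) hB.contDiff_energyDensity (hmeas hγ) (hmeas hV)
    (fun t ht => le_max_of_le_left (max_le_max (hMγ t ht) (norm_deriv_le_of_lipschitz hγ)))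
    (fun t ht => le_max_of_le_right (max_le_max (hMV t ht) (norm_deriv_le_of_lipschitz hV)))
  simp only [cenergy_add_smul B hγ hV] at hmin
  have hcrit := hmin.hasDerivAt_eq_zero hderiv
  simpa [hB.fderiv_energyDensity] using hcrit

end IsIsometricOn

/-! ### Geodesic equation for isometric curves -/

namespace IsUniformlyEuclidean

variable {n : ℕ} {B : BilinField n} {k K : ℝ}

lemma isInvertible (hB : IsUniformlyEuclidean B k K) (x : En n) : (B x).IsInvertible := by
  have hker : LinearMap.ker (B x).toLinearMap = ⊥ := by
    refine LinearMap.ker_eq_bot'.2 fun v (hv : B x v = 0) => ?_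
    have hle := hB.lower x v
    rw [hv, zero_apply] at hle
    simpa [hB.k_pos.ne'] using hle.antisymm (sq_nonneg _)
  have hrank : Module.finrank ℝ (En n) = Module.finrank ℝ (En n →L[ℝ] ℝ) :=
    (InnerProductSpace.toDual ℝ (En n)).toLinearEquiv.finrank_eq
  exact ⟨(LinearEquiv.ofInjectiveOfFinrankEq (B x).toLinearMap (LinearMap.ker_eq_bot.1 hker)
    hrank).toContinuousLinearEquiv, rfl⟩

end IsUniformlyEuclidean

/-- The velocity whose momentum, that is its metric dual, at `x` is the covector `P`; it is `0`
where `B x` is not invertible. -/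
noncomputable def BilinField.vel {n : ℕ} (B : BilinField n) (x : En n) (P : En n →L[ℝ] ℝ) : En n :=
  (B x).inverse P

namespace IsUniformlyEuclidean

variable {n : ℕ} {B : BilinField n} {k K : ℝ}

lemma vel_apply (hB : IsUniformlyEuclidean B k K) (x v : En n) : B.vel x (B x v) = v :=
  (hB.isInvertible x).inverse_apply_self v

lemma apply_vel (hB : IsUniformlyEuclidean B k K) (x : En n) (P : En n →L[ℝ] ℝ) :
    B x (B.vel x P) = P :=
  (hB.isInvertible x).self_apply_inverse P

lemma contDiff_vel (hB : IsUniformlyEuclidean B k K) :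
    ContDiff ℝ 1 (fun p : En n × (En n →L[ℝ] ℝ) => B.vel p.1 p.2) := by
  have hinverse : ContDiff ℝ 1 (fun x => (B x).inverse) := contDiff_iff_contDiffAt.2 fun x =>
    (hB.isInvertible x).contDiffAt_map_inverse.comp x
      (hB.contDiff.contDiffAt.of_le one_le_two)
  exact (hinverse.comp contDiff_fst).clm_apply contDiff_snd

end IsUniformlyEuclidean

/-- Unit speed solutions on `I` of the geodesic equation of `B`, written as an equation for the
momentum `B(γ)(γ')`. One-sided derivatives at the ends of `I` let the same notion serve for
segments and for rays. -/
structure IsUnitGeodesicOn {n : ℕ} (B : BilinField n) (γ : ℝ → En n) (I : Set ℝ) : Prop where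
  differentiableOn : DifferentiableOn ℝ γ I
  momentum : ∀ t ∈ I, HasDerivWithinAt (fun s => B (γ s) (derivWithin γ I s))
    (B.force (γ t) (derivWithin γ I t)) I t
  unit_speed : ∀ t ∈ I, B (γ t) (derivWithin γ I t) (derivWithin γ I t) = 1

lemma IsUnitGeodesicOn.congr {n : ℕ} {B : BilinField n} {γ γ₁ : ℝ → En n} {I : Set ℝ}
    (h : IsUnitGeodesicOn B γ I) (hγ : EqOn γ₁ γ I) : IsUnitGeodesicOn B γ₁ I := by
  have hderiv {t : ℝ} (ht : t ∈ I) : derivWithin γ₁ I t = derivWithin γ I t :=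
    derivWithin_congr hγ (hγ ht)
  refine ⟨h.differentiableOn.congr hγ, fun t ht => ?_, fun t ht => ?_⟩
  · rw [hγ ht, hderiv ht]
    refine (h.momentum t ht).congr (fun s hs => ?_) ?_
    · rw [hγ hs, hderiv hs]
    · rw [hγ ht, hderiv ht]
  · rw [hγ ht, hderiv ht, h.unit_speed t ht]

namespace IsIsometricOn

open MeasureTheory

variable {n : ℕ} {B : BilinField n} {k K : ℝ} {γ : ℝ → En n} {a b : ℝ}

lemma exists_ae_momentum_eq (h : IsIsometricOn (rdist B.toMetric) γ (Icc a b))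
    (hB : IsUniformlyEuclidean B k K) (hab : a < b) {C : NNReal} (hγ : LipschitzWith C γ) :
    ∃ c, ∀ᵐ t, t ∈ Ioo a b →
      B (γ t) (deriv γ t) = c + ∫ s in a..t, B.force (γ s) (deriv γ s) := by
  have hforce := intervalIntegrable_comp_deriv (a := a) (b := b) hB.contDiff_force.continuous hγ
  have hmomentum := intervalIntegrable_comp_deriv (a := a) (b := b)
    (Φ := fun p : En n × En n => B p.1 p.2)
    ((hB.contDiff.continuous.comp continuous_fst).clm_apply continuous_snd) hγ
  refine exists_ae_eq_const_add_integral_of_forall_lipschitz hab hforce hmomentum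
    fun D φ hφ hφa hφb => ?_
  have hint := (hforce.continuousOn_smul hφ.continuous.continuousOn).add
    (intervalIntegrable_deriv_smul hφ hmomentum)
  ext e
  have hV : LipschitzWith (‖ContinuousLinearMap.toSpanSingleton ℝ e‖₊ * D) fun t => φ t • e :=
    (ContinuousLinearMap.toSpanSingleton ℝ e).lipschitz.comp hφ
  rw [ContinuousLinearMap.intervalIntegral_apply hint, zero_apply,
    ← h.integral_force_add_momentum_eq_zero hB hab hγ hV (by simp [hφa]) (by simp [hφb])]
  refine intervalIntegral.integral_congr_ae ?_
  filter_upwards [hφ.ae_differentiableAt_real] with t ht _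
  simp [deriv_smul_const ht]

lemma exists_momentum (h : IsIsometricOn (rdist B.toMetric) γ (Icc a b))
    (hB : IsUniformlyEuclidean B k K) (hab : a < b) {C : NNReal} (hγ : LipschitzWith C γ) :
    ∃ P : ℝ → En n →L[ℝ] ℝ, Continuous P ∧
      (∀ᵐ t, t ∈ Ioo a b → deriv γ t = B.vel (γ t) (P t)) ∧
      ∀ t ∈ Icc a b, HasDerivWithinAt P (B.force (γ t) (B.vel (γ t) (P t))) (Icc a b) t := by
  obtain ⟨c, hc⟩ := h.exists_ae_momentum_eq hB hab hγ
  obtain ⟨P, hP⟩ : ∃ P : ℝ → En n →L[ℝ] ℝ,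
      ∀ t, P t = c + ∫ s in a..t, B.force (γ s) (deriv γ s) := ⟨_, fun _ => rfl⟩
  have hint (u v : ℝ) : IntervalIntegrable (fun s => B.force (γ s) (deriv γ s)) volume u v :=
    intervalIntegrable_comp_deriv hB.contDiff_force.continuous hγ
  have hPcont : Continuous P :=
    (continuous_const.add (intervalIntegral.continuous_primitive hint a)).congr
      fun t => (hP t).symm
  have hae : ∀ᵐ t, t ∈ Ioo a b → deriv γ t = B.vel (γ t) (P t) :=
    hc.mono fun t ht htI => by rw [hP, ← ht htI, hB.vel_apply]
  have hvel : Continuous fun t => B.vel (γ t) (P t) :=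
    hB.contDiff_vel.continuous.comp (hγ.continuous.prodMk hPcont)
  have hforce : Continuous fun t => B.force (γ t) (B.vel (γ t) (P t)) :=
    hB.contDiff_force.continuous.comp₂ hγ.continuous hvel
  exact ⟨P, hPcont, hae, fun t => hasDerivWithinAt_of_forall_eq_add_integral hforce
    (f := fun s => B.force (γ s) (deriv γ s)) (hae.mono fun s hs hsI => by rw [hs hsI])
    (fun s _ => by simp [hP])⟩

lemma isUnitGeodesicOn_of_lipschitz (h : IsIsometricOn (rdist B.toMetric) γ (Icc a b))
    (hB : IsUniformlyEuclidean B k K) (hab : a < b) {C : NNReal} (hγ : LipschitzWith C γ) :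
    IsUnitGeodesicOn B γ (Icc a b) := by
  obtain ⟨P, hPcont, hae, hPderiv⟩ := h.exists_momentum hB hab hγ
  have hvel : Continuous fun t => B.vel (γ t) (P t) :=
    hB.contDiff_vel.continuous.comp (hγ.continuous.prodMk hPcont)
  have hγderiv (t : ℝ) (ht : t ∈ Icc a b) :
      HasDerivWithinAt γ (B.vel (γ t) (P t)) (Icc a b) t :=
    hasDerivWithinAt_of_forall_eq_add_integral hvel hae
      (fun s _ => by rw [integral_deriv_of_lipschitz hγ, add_sub_cancel]) ht
  have hwithin (t : ℝ) (ht : t ∈ Icc a b) : derivWithin γ (Icc a b) t = B.vel (γ t) (P t) :=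
    (hγderiv t ht).derivWithin (uniqueDiffOn_Icc hab t ht)
  refine ⟨fun t ht => (hγderiv t ht).differentiableWithinAt, fun t ht => ?_, fun t ht => ?_⟩
  · rw [hwithin t ht]
    exact (hPderiv t ht).congr_of_mem (fun s hs => by rw [hwithin s hs, hB.apply_vel]) ht
  · have hspeed : ∀ᵐ s ∂volume.restrict (Icc a b),
        B (γ s) (B.vel (γ s) (P s)) (B.vel (γ s) (P s)) = 1 := by
      rw [← ae_restrict_iff' measurableSet_Ioo, Measure.restrict_congr_set Ioo_ae_eq_Icc] at hae
      filter_upwards [hae, h.ae_apply_deriv_eq_one hB hab hγ] with s hs hone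
      rwa [← hs]
    have hcont : Continuous fun s => B (γ s) (B.vel (γ s) (P s)) (B.vel (γ s) (P s)) :=
      hB.contDiff_energyDensity.continuous.comp (hγ.continuous.prodMk hvel)
    rw [hwithin t ht]
    exact Measure.eqOn_Icc_of_ae_eq volume hab.ne hspeed hcont.continuousOn continuousOn_const ht

lemma isUnitGeodesicOn (h : IsIsometricOn (rdist B.toMetric) γ (Icc a b))
    (hB : IsUniformlyEuclidean B k K) (hab : a < b) : IsUnitGeodesicOn B γ (Icc a b) := by
  obtain ⟨γ₁, hγ₁, heq⟩ := (h.lipschitzOnWith hB).extend_finite_dimension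
  exact ((h.congr heq.symm).isUnitGeodesicOn_of_lipschitz hB hab hγ₁).congr heq

end IsIsometricOn

/-! ### The geodesic flow -/

namespace IsUnitGeodesicOn

variable {n : ℕ} {B : BilinField n} {k K : ℝ} {γ : ℝ → En n} {I : Set ℝ}

lemma of_forall_eventuallyEq
    (h : ∀ t ∈ I, ∃ J : Set ℝ, t ∈ J ∧ J =ᶠ[nhds t] I ∧ IsUnitGeodesicOn B γ J) :
    IsUnitGeodesicOn B γ I := by
  refine ⟨fun t ht => ?_, fun t ht => ?_, fun t ht => ?_⟩ <;> obtain ⟨J, htJ, hJI, hJ⟩ := h t ht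
  · exact (differentiableWithinAt_congr_nhds (nhdsWithin_eq_iff_eventuallyEq.2 hJI)).1
      (hJ.differentiableOn t htJ)
  · have heq : ∀ᶠ s in nhdsWithin t I, derivWithin γ I s = derivWithin γ J s :=
      nhdsWithin_le_nhds <| (eventually_eventually_nhds.2 hJI).mono fun s hs =>
        (derivWithin_congr_set hs).symm
    rw [← derivWithin_congr_set hJI]
    refine ((hasDerivWithinAt_congr_set hJI).1 (hJ.momentum t htJ)).congr_of_eventuallyEq_of_mem
      (heq.mono fun s hs => ?_) ht
    simp only [hs]
  · rw [← derivWithin_congr_set hJI, hJ.unit_speed t htJ]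

lemma of_isGeodesicOn (hB : IsUniformlyEuclidean B k K)
    (h : IsGeodesicOn (rdist B.toMetric) γ 1 (Ici 0)) : IsUnitGeodesicOn B γ (Ici 0) := by
  refine of_forall_eventuallyEq fun t ht => ?_
  obtain ⟨δ, hδ, hiso⟩ := h t ht
  have hball : Ioo (t - δ / 2) (t + δ / 2) ∈ nhds t := Ioo_mem_nhds (by linarith) (by linarith)
  refine ⟨Icc (max 0 (t - δ / 2)) (t + δ / 2), ⟨max_le ht (by linarith), by linarith⟩, ?_, ?_⟩
  · filter_upwards [hball] with s hs
    exact propext ⟨fun hsJ => (le_max_left _ _).trans hsJ.1,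
      fun hs0 => ⟨max_le hs0 hs.1.le, hs.2.le⟩⟩
  · refine IsIsometricOn.isUnitGeodesicOn (fun s hs u hu => ?_) hB
      (max_lt (by linarith [mem_Ici.1 ht]) (by linarith))
    have hclose {s : ℝ} (hs : s ∈ Icc (max 0 (t - δ / 2)) (t + δ / 2)) : |s - t| < δ := by
      rw [abs_lt]
      constructor <;> linarith [hs.2, (le_max_right _ _).trans hs.1]
    have hnonneg {s : ℝ} (hs : s ∈ Icc (max 0 (t - δ / 2)) (t + δ / 2)) : s ∈ Ici 0 :=
      (le_max_left _ _).trans hs.1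
    rw [hiso s (hnonneg hs) u (hnonneg hu) (hclose hs) (hclose hu), one_mul]

lemma hasDerivWithinAt (h : IsUnitGeodesicOn B γ I) {t : ℝ} (ht : t ∈ I) :
    HasDerivWithinAt γ (derivWithin γ I t) I t :=
  (h.differentiableOn t ht).hasDerivWithinAt

lemma norm_derivWithin_le (h : IsUnitGeodesicOn B γ I) (hB : IsUniformlyEuclidean B k K) {t : ℝ}
    (ht : t ∈ I) : ‖derivWithin γ I t‖ ≤ k⁻¹ := by
  have hle := hB.mul_norm_le_sqrt (γ t) (derivWithin γ I t)
  rwa [h.unit_speed t ht, Real.sqrt_one, ← le_inv_mul_iff₀ hB.k_pos, mul_one] at hle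

lemma norm_sub_le (h : IsUnitGeodesicOn B γ I) (hB : IsUniformlyEuclidean B k K) (hI : Convex ℝ I)
    {s t : ℝ} (hs : s ∈ I) (ht : t ∈ I) : ‖γ t - γ s‖ ≤ k⁻¹ * |t - s| :=
  hI.norm_image_sub_le_of_norm_hasDerivWithin_le (fun _ hu => h.hasDerivWithinAt hu)
    (fun _ hu => h.norm_derivWithin_le hB hu) hs ht

lemma norm_momentum_le (h : IsUnitGeodesicOn B γ I) (hB : IsUniformlyEuclidean B k K) {t : ℝ}
    (ht : t ∈ I) : ‖B (γ t) (derivWithin γ I t)‖ ≤ K := by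
  have hle (w : En n) : B (γ t) (derivWithin γ I t) w ≤ K * ‖w‖ := by
    refine (hB.le_sqrt_mul_sqrt _ _ w).trans ?_
    rw [h.unit_speed t ht, Real.sqrt_one, one_mul]
    exact hB.sqrt_le_mul_norm _ w
  refine ContinuousLinearMap.opNorm_le_bound _ hB.K_pos.le fun w => abs_le'.2 ⟨hle w, ?_⟩
  simpa using hle (-w)

end IsUnitGeodesicOn

/-- The geodesic vector field on phase space, the space of positions and momenta. -/
noncomputable def BilinField.field {n : ℕ} (B : BilinField n) (z : En n × (En n →L[ℝ] ℝ)) :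
    En n × (En n →L[ℝ] ℝ) :=
  (B.vel z.1 z.2, B.force z.1 (B.vel z.1 z.2))

/-- Position and momentum at time `t` of a curve parametrised by `[0, ∞)`. -/
noncomputable def BilinField.phase {n : ℕ} (B : BilinField n) (γ : ℝ → En n) (t : ℝ) :
    En n × (En n →L[ℝ] ℝ) :=
  (γ t, B (γ t) (derivWithin γ (Ici 0) t))

lemma IsUniformlyEuclidean.contDiff_field {n : ℕ} {B : BilinField n} {k K : ℝ}
    (hB : IsUniformlyEuclidean B k K) : ContDiff ℝ 1 B.field :=
  hB.contDiff_vel.prodMk (hB.contDiff_force.comp₂ contDiff_fst hB.contDiff_vel)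

namespace IsUnitGeodesicOn

variable {n : ℕ} {B : BilinField n} {k K : ℝ} {γ : ℝ → En n}

lemma hasDerivWithinAt_phase (h : IsUnitGeodesicOn B γ (Ici 0)) (hB : IsUniformlyEuclidean B k K)
    {t : ℝ} (ht : 0 ≤ t) : HasDerivWithinAt (B.phase γ) (B.field (B.phase γ t)) (Ici 0) t := by
  have hfield : B.field (B.phase γ t) =
      (derivWithin γ (Ici 0) t, B.force (γ t) (derivWithin γ (Ici 0) t)) := by
    simp only [BilinField.field, BilinField.phase, hB.vel_apply]
  rw [hfield]
  exact (h.hasDerivWithinAt ht).prodMk (h.momentum t ht)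

lemma phase_mem_closedBall (h : IsUnitGeodesicOn B γ (Ici 0)) (hB : IsUniformlyEuclidean B k K)
    {r t T : ℝ} (hr : ‖γ 0‖ ≤ r) (ht : t ∈ Icc 0 T) :
    B.phase γ t ∈ Metric.closedBall 0 (max (r + k⁻¹ * T) K) := by
  rw [mem_closedBall_zero_iff]
  refine max_le_max ?_ (h.norm_momentum_le hB ht.1)
  have hk := inv_nonneg.2 hB.k_pos.le
  calc ‖γ t‖ ≤ ‖γ 0‖ + ‖γ t - γ 0‖ := norm_le_insert' _ _
    _ ≤ r + k⁻¹ * |t - 0| :=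
      add_le_add hr (h.norm_sub_le hB (convex_Ici 0) self_mem_Ici ht.1)
    _ ≤ r + k⁻¹ * T := by
      rw [sub_zero, abs_of_nonneg ht.1]
      gcongr
      exact ht.2

end IsUnitGeodesicOn

namespace IsUniformlyEuclidean

variable {n : ℕ} {B : BilinField n} {k K : ℝ}

theorem exists_forall_dist_phase_le (hB : IsUniformlyEuclidean B k K) (r : ℝ) {T : ℝ}
    (hT : 0 ≤ T) :
    ∃ L : ℝ, ∀ γ₁ γ₂ : ℝ → En n, IsUnitGeodesicOn B γ₁ (Ici 0) → IsUnitGeodesicOn B γ₂ (Ici 0) →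
      ‖γ₁ 0‖ ≤ r → ‖γ₂ 0‖ ≤ r →
      dist (B.phase γ₁ T) (B.phase γ₂ T) ≤ dist (B.phase γ₁ 0) (B.phase γ₂ 0) * L := by
  obtain ⟨Λ, hΛ⟩ := (hB.contDiff_field.contDiffOn
    (s := Metric.closedBall 0 (max (r + k⁻¹ * T) K))).exists_lipschitzOnWith one_ne_zero
    (convex_closedBall _ _) (isCompact_closedBall _ _)
  have hcont {γ : ℝ → En n} (h : IsUnitGeodesicOn B γ (Ici 0)) :
      ContinuousOn (B.phase γ) (Icc 0 T) := fun t ht =>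
    (h.hasDerivWithinAt_phase hB ht.1).continuousWithinAt.mono Icc_subset_Ici_self
  have hderiv {γ : ℝ → En n} (h : IsUnitGeodesicOn B γ (Ici 0)) (t : ℝ) (ht : t ∈ Ico 0 T) :
      HasDerivWithinAt (B.phase γ) (B.field (B.phase γ t)) (Ici t) t :=
    (h.hasDerivWithinAt_phase hB ht.1).mono (Ici_subset_Ici.2 ht.1)
  have hmem {γ : ℝ → En n} (h : IsUnitGeodesicOn B γ (Ici 0)) (hr : ‖γ 0‖ ≤ r) (t : ℝ)
      (ht : t ∈ Ico 0 T) : B.phase γ t ∈ Metric.closedBall 0 (max (r + k⁻¹ * T) K) :=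
    h.phase_mem_closedBall hB hr (Ico_subset_Icc_self ht)
  exact ⟨Real.exp (Λ * (T - 0)), fun γ₁ γ₂ h₁ h₂ hr₁ hr₂ =>
    dist_le_of_trajectories_ODE_of_mem (fun _ _ => hΛ) (hcont h₁) (hderiv h₁) (hmem h₁ hr₁)
      (hcont h₂) (hderiv h₂) (hmem h₂ hr₂) le_rfl T (right_mem_Icc.2 hT)⟩

end IsUniformlyEuclidean

namespace IsUnitGeodesicOn

variable {n : ℕ} {B : BilinField n} {k K : ℝ} {γ : ℝ → En n}

lemma eqOn_Ici (hB : IsUniformlyEuclidean B k K) {γ₁ : ℝ → En n}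
    (h₁ : IsUnitGeodesicOn B γ₁ (Ici 0)) (h : IsUnitGeodesicOn B γ (Ici 0)) (hpos : γ₁ 0 = γ 0)
    (hvel : derivWithin γ₁ (Ici 0) 0 = derivWithin γ (Ici 0) 0) : EqOn γ₁ γ (Ici 0) := by
  intro t ht
  obtain ⟨L, hL⟩ := hB.exists_forall_dist_phase_le ‖γ 0‖ ht
  have hdist := hL γ₁ γ h₁ h (congrArg norm hpos).le le_rfl
  have hphase : B.phase γ₁ 0 = B.phase γ 0 := by rw [BilinField.phase, hpos, hvel, BilinField.phase]
  rw [hphase, dist_self, zero_mul, dist_le_zero] at hdist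
  exact congrArg Prod.fst hdist

lemma eventually_phase_mem (hB : IsUniformlyEuclidean B k K) (h : IsUnitGeodesicOn B γ (Ici 0))
    {T : ℝ} (hT : 0 ≤ T) {W : Set (En n × (En n →L[ℝ] ℝ))} (hW : W ∈ nhds (B.phase γ T)) :
    ∀ᶠ z in nhds (γ 0, derivWithin γ (Ici 0) 0), ∀ γ₁, IsUnitGeodesicOn B γ₁ (Ici 0) →
      (γ₁ 0, derivWithin γ₁ (Ici 0) 0) = z → B.phase γ₁ T ∈ W := by
  obtain ⟨L, hL⟩ := hB.exists_forall_dist_phase_le (‖γ 0‖ + 1) hT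
  obtain ⟨ε, hε, hεW⟩ := Metric.mem_nhds_iff.1 hW
  have hmomentum : Continuous fun z : En n × En n => (z.1, B z.1 z.2) :=
    continuous_fst.prodMk ((hB.contDiff.continuous.comp continuous_fst).clm_apply continuous_snd)
  have hdist : Continuous fun z : En n × En n => dist (z.1, B z.1 z.2) (B.phase γ 0) * L :=
    (hmomentum.dist continuous_const).mul_const L
  have hzero : dist (γ 0, B (γ 0) (derivWithin γ (Ici 0) 0)) (B.phase γ 0) * L < ε := by
    rwa [BilinField.phase, dist_self, zero_mul]
  filter_upwards [hdist.continuousAt.eventually_lt_const hzero,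
    continuous_fst.norm.continuousAt.eventually_lt_const (lt_add_one ‖γ 0‖)] with z hz hz' γ₁ h₁ hγ₁
  subst hγ₁
  exact hεW ((hL γ₁ γ h₁ h hz'.le (by linarith)).trans_lt hz)

end IsUnitGeodesicOn

/-! ### Escape to infinity -/

/-- Outside the ball of radius `R` the metric is close to a cone with vertex `0`, up to a relative
error `ε`: the metric dual of the position vector is nearly the Euclidean one, and the metric is
nearly constant along radial lines. -/
structure IsAlmostConical {n : ℕ} (B : BilinField n) (ε R : ℝ) : Prop where
  radial : ∀ x, R ≤ ‖x‖ → ∀ v, |B x v x - ⟪v, x⟫| ≤ ε * ‖v‖ * ‖x‖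
  deriv : ∀ x, R ≤ ‖x‖ → ∀ v, |fderiv ℝ B x x v v| ≤ ε * ‖v‖ ^ 2

lemma IsAlmostConical.mono {n : ℕ} {B : BilinField n} {ε R R' : ℝ} (h : IsAlmostConical B ε R)
    (hR : R ≤ R') : IsAlmostConical B ε R' :=
  ⟨fun x hx => h.radial x (hR.trans hx), fun x hx => h.deriv x (hR.trans hx)⟩

/-- The part of phase space, for a metric `B ≥ k²`, from which geodesics never return to the ball
of radius `R`: position outside the ball and radial momentum large. -/
def escapeRegion (n : ℕ) (k R : ℝ) : Set (En n × (En n →L[ℝ] ℝ)) :=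
  {z | R < ‖z.1‖ ∧ k / 4 * ‖z.1‖ < z.2 z.1}

lemma isOpen_escapeRegion (n : ℕ) (k R : ℝ) : IsOpen (escapeRegion n k R) :=
  (isOpen_lt continuous_const continuous_fst.norm).inter
    (isOpen_lt (continuous_fst.norm.const_mul (k / 4)) (continuous_snd.clm_apply continuous_fst))

namespace IsUnitGeodesicOn

variable {n : ℕ} {B : BilinField n} {k K R : ℝ} {γ : ℝ → En n} {I : Set ℝ} {t₁ t₂ : ℝ}

lemma hasDerivWithinAt_radial_momentum (h : IsUnitGeodesicOn B γ I) {t : ℝ} (ht : t ∈ I) :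
    HasDerivWithinAt (fun s => B (γ s) (derivWithin γ I s) (γ s))
      (B.force (γ t) (derivWithin γ I t) (γ t) + 1) I t := by
  have hderiv := (h.momentum t ht).clm_apply (h.hasDerivWithinAt ht)
  rwa [h.unit_speed t ht] at hderiv

lemma neg_half_le_force (h : IsUnitGeodesicOn B γ I) (hB : IsUniformlyEuclidean B k K)
    (hC : IsAlmostConical B (k ^ 2 / 4) R) {t : ℝ} (ht : t ∈ I) (hR : R ≤ ‖γ t‖) :
    -(1 / 2) ≤ B.force (γ t) (derivWithin γ I t) (γ t) := by
  have hlower := hB.lower (γ t) (derivWithin γ I t)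
  have hderiv := (abs_le.1 (hC.deriv (γ t) hR (derivWithin γ I t))).1
  rw [h.unit_speed t ht] at hlower
  rw [BilinField.force_apply]
  linarith

lemma radial_momentum_add_le (h : IsUnitGeodesicOn B γ (Ici 0)) (hB : IsUniformlyEuclidean B k K)
    (hC : IsAlmostConical B (k ^ 2 / 4) R) (ht₁ : 0 ≤ t₁) (ht : t₁ ≤ t₂)
    (hR : ∀ t ∈ Icc t₁ t₂, R ≤ ‖γ t‖) :
    B (γ t₁) (derivWithin γ (Ici 0) t₁) (γ t₁) + (t₂ - t₁) / 2 ≤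
      B (γ t₂) (derivWithin γ (Ici 0) t₂) (γ t₂) := by
  have hsub : Icc t₁ t₂ ⊆ Ici 0 := fun t ht => ht₁.trans ht.1
  have hderiv (t : ℝ) (ht : t ∈ Icc t₁ t₂) :=
    (((h.hasDerivWithinAt_radial_momentum (hsub ht)).fun_sub
      ((hasDerivWithinAt_id t _).div_const 2))).mono hsub
  have hmono := monotoneOn_of_hasDerivWithinAt_nonneg (convex_Icc t₁ t₂)
    (fun t ht => (hderiv t ht).continuousWithinAt)
    (fun t ht => (hderiv t (interior_subset ht)).mono interior_subset) fun t ht => by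
      have := h.neg_half_le_force hB hC (hsub (interior_subset ht)) (hR t (interior_subset ht))
      linarith
  have hle := hmono (left_mem_Icc.2 ht) (right_mem_Icc.2 ht) ht
  simp only [id_eq] at hle
  linarith

/- The radial momentum has derivative at least `1 / 2`, and `k / 4 * ‖γ‖` at most `1 / 4`. -/
lemma radial_momentum_sub_add_le (h : IsUnitGeodesicOn B γ (Ici 0))
    (hB : IsUniformlyEuclidean B k K) (hC : IsAlmostConical B (k ^ 2 / 4) R) (ht₁ : 0 ≤ t₁)
    (ht : t₁ ≤ t₂) (hR : ∀ t ∈ Icc t₁ t₂, R ≤ ‖γ t‖) :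
    B (γ t₁) (derivWithin γ (Ici 0) t₁) (γ t₁) - k / 4 * ‖γ t₁‖ + (t₂ - t₁) / 4 ≤
      B (γ t₂) (derivWithin γ (Ici 0) t₂) (γ t₂) - k / 4 * ‖γ t₂‖ := by
  have hk := hB.k_pos
  have hmomentum := h.radial_momentum_add_le hB hC ht₁ ht hR
  have hnorm : k / 4 * ‖γ t₂‖ ≤ k / 4 * ‖γ t₁‖ + (t₂ - t₁) / 4 :=
    calc k / 4 * ‖γ t₂‖ ≤ k / 4 * (‖γ t₁‖ + ‖γ t₂ - γ t₁‖) := by gcongr; exact norm_le_insert' _ _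
      _ ≤ k / 4 * (‖γ t₁‖ + k⁻¹ * |t₂ - t₁|) := by
        gcongr
        exact h.norm_sub_le hB (convex_Ici 0) ht₁ (ht₁.trans ht)
      _ = k / 4 * ‖γ t₁‖ + (t₂ - t₁) / 4 := by
        rw [abs_of_nonneg (sub_nonneg.2 ht)]
        field_simp
  linarith

lemma inner_derivWithin_nonneg (h : IsUnitGeodesicOn B γ I) (hB : IsUniformlyEuclidean B k K)
    (hC : IsAlmostConical B (k ^ 2 / 4) R) {t : ℝ} (ht : t ∈ I) (hR : R ≤ ‖γ t‖)
    (hu : k / 4 * ‖γ t‖ ≤ B (γ t) (derivWithin γ I t) (γ t)) :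
    0 ≤ ⟪γ t, derivWithin γ I t⟫ := by
  have hk := hB.k_pos
  have herror : k ^ 2 / 4 * ‖derivWithin γ I t‖ * ‖γ t‖ ≤ k / 4 * ‖γ t‖ :=
    calc k ^ 2 / 4 * ‖derivWithin γ I t‖ * ‖γ t‖ ≤ k ^ 2 / 4 * k⁻¹ * ‖γ t‖ := by
          gcongr
          exact h.norm_derivWithin_le hB ht
      _ = k / 4 * ‖γ t‖ := by field_simp
  have hradial := (abs_le.1 (hC.radial (γ t) hR (derivWithin γ I t))).2
  rw [real_inner_comm]
  linarith

lemma norm_le_norm_of_phase_mem (h : IsUnitGeodesicOn B γ (Ici 0))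
    (hB : IsUniformlyEuclidean B k K) (hC : IsAlmostConical B (k ^ 2 / 4) R) (ht₁ : 0 ≤ t₁)
    (ht : t₁ ≤ t₂) (hR : ∀ t ∈ Ico t₁ t₂, R ≤ ‖γ t‖)
    (hphase : B.phase γ t₁ ∈ escapeRegion n k R) : ‖γ t₁‖ ≤ ‖γ t₂‖ := by
  have hsub : Icc t₁ t₂ ⊆ Ici 0 := fun t ht => ht₁.trans ht.1
  have hstart : k / 4 * ‖γ t₁‖ < B (γ t₁) (derivWithin γ (Ici 0) t₁) (γ t₁) := hphase.2
  have hderiv (t : ℝ) (ht : t ∈ Icc t₁ t₂) :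
      HasDerivWithinAt (‖γ ·‖ ^ 2) (2 * ⟪γ t, derivWithin γ (Ici 0) t⟫) (Icc t₁ t₂) t :=
    ((h.hasDerivWithinAt (hsub ht)).mono hsub).norm_sq
  have hnonneg (t : ℝ) (ht : t ∈ Ioo t₁ t₂) : 0 ≤ ⟪γ t, derivWithin γ (Ici 0) t⟫ := by
    have hgrowth := h.radial_momentum_sub_add_le hB hC ht₁ ht.1.le fun s hs =>
      hR s ⟨hs.1, hs.2.trans_lt ht.2⟩
    refine h.inner_derivWithin_nonneg hB hC (ht₁.trans ht.1.le) (hR t (Ioo_subset_Ico_self ht)) ?_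
    linarith [ht.1]
  have hmono := monotoneOn_of_hasDerivWithinAt_nonneg (convex_Icc t₁ t₂)
    (fun t ht => (hderiv t ht).continuousWithinAt)
    (fun t ht => (hderiv t (interior_subset ht)).mono interior_subset) fun t ht =>
      mul_nonneg zero_le_two (hnonneg t (by rwa [interior_Icc] at ht))
  exact (sq_le_sq₀ (norm_nonneg _) (norm_nonneg _)).1
    (hmono (left_mem_Icc.2 ht) (right_mem_Icc.2 ht) ht)

theorem lt_norm_of_phase_mem (h : IsUnitGeodesicOn B γ (Ici 0)) (hB : IsUniformlyEuclidean B k K)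
    (hC : IsAlmostConical B (k ^ 2 / 4) R) (ht₁ : 0 ≤ t₁)
    (hphase : B.phase γ t₁ ∈ escapeRegion n k R) (ht : t₁ ≤ t₂) : R < ‖γ t₂‖ := by
  by_contra! hle
  have hcont : ContinuousOn (fun s => ‖γ s‖) (Icc t₁ t₂) :=
    (h.differentiableOn.continuousOn.mono fun s hs => ht₁.trans hs.1).norm
  have hcompact : IsCompact (Icc t₁ t₂ ∩ (fun s => ‖γ s‖) ⁻¹' Iic R) :=
    isCompact_Icc.of_isClosed_subset (hcont.preimage_isClosed_of_isClosed isClosed_Icc isClosed_Iic)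
      inter_subset_left
  obtain ⟨s, ⟨hs, hsR⟩, hfirst⟩ := hcompact.exists_isLeast ⟨t₂, right_mem_Icc.2 ht, hle⟩
  have hbefore (u : ℝ) (hu : u ∈ Ico t₁ s) : R ≤ ‖γ u‖ := by
    by_contra! hlt
    exact (hfirst ⟨⟨hu.1, hu.2.le.trans hs.2⟩, hlt.le⟩).not_gt hu.2
  have hmono := h.norm_le_norm_of_phase_mem hB hC ht₁ hs.1 hbefore hphase
  exact (hphase.1.trans_le hmono).not_ge hsR

lemma exists_phase_mem_escapeRegion (h : IsUnitGeodesicOn B γ (Ici 0))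
    (hB : IsUniformlyEuclidean B k K) (hC : IsAlmostConical B (k ^ 2 / 4) R) {T : ℝ} (hT : 0 ≤ T)
    (hR : ∀ t, T ≤ t → R < ‖γ t‖) : ∃ t, 0 ≤ t ∧ B.phase γ t ∈ escapeRegion n k R := by
  set c := B (γ T) (derivWithin γ (Ici 0) T) (γ T) - k / 4 * ‖γ T‖ with hc
  have hle : T ≤ T + 4 * (|c| + 1) := by linarith [abs_nonneg c]
  have hgrowth := h.radial_momentum_sub_add_le hB hC hT hle fun t ht => (hR t ht.1).le
  refine ⟨T + 4 * (|c| + 1), hT.trans hle, hR _ hle, sub_pos.1 (lt_of_lt_of_le ?_ hgrowth)⟩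
  linarith [neg_abs_le c]

end IsUnitGeodesicOn

/-! ### The exponential map -/

lemma IsGeodesicOn.comp_mul_left {n : ℕ} {d : En n → En n → ℝ} {γ : ℝ → En n} {c a : ℝ}
    (h : IsGeodesicOn d γ c univ) (ha : 0 < a) (I : Set ℝ) :
    IsGeodesicOn d (fun s => γ (a * s)) (c * a) I := by
  intro t _
  obtain ⟨δ, hδ, hd⟩ := h (a * t) (mem_univ _)
  have habs (s u : ℝ) : |a * s - a * u| = a * |s - u| := by
    rw [← mul_sub, abs_mul, abs_of_pos ha]
  have hclose {s : ℝ} (hs : |s - t| < δ / a) : |a * s - a * t| < δ := by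
    rwa [habs, mul_comm, ← lt_div_iff₀ ha]
  refine ⟨δ / a, div_pos hδ ha, fun s _ u _ hs hu => ?_⟩
  rw [hd _ (mem_univ _) _ (mem_univ _) (hclose hs) (hclose hu), habs, mul_assoc]

lemma BilinField.toMetric_smul_smul {n : ℕ} (B : BilinField n) (x v : En n) (t : ℝ) :
    B.toMetric x (t • v) (t • v) = t ^ 2 * B x v v := by
  simp only [BilinField.toMetric, map_smul, smul_apply, smul_eq_mul]
  ring

lemma IsExpAt.exists_isUnitGeodesicOn {n : ℕ} {B : BilinField n} {k K : ℝ}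
    (hB : IsUniformlyEuclidean B k K) {x ξ : En n} {ex : En n → En n}
    (hex : IsExpAt B.toMetric x ex) (hξ : B x ξ ξ = 1) {t : ℝ} (ht : 0 < t) :
    ∃ σ : ℝ → En n, IsUnitGeodesicOn B σ (Ici 0) ∧ σ 0 = x ∧ derivWithin σ (Ici 0) 0 = ξ ∧
      ex (t • ξ) = σ t := by
  obtain ⟨c, hc₀, hc', hgeo, hc₁⟩ := hex (t • ξ)
  have hξ₀ : ξ ≠ 0 := by
    rintro rfl
    simp at hξ
  rw [B.toMetric_smul_smul, hξ, mul_one, Real.sqrt_sq ht.le] at hgeo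
  have hcomp := hgeo.comp_mul_left (inv_pos.2 ht) (Ici 0)
  rw [mul_inv_cancel₀ ht.ne'] at hcomp
  have hdiff : DifferentiableAt ℝ c 0 :=
    differentiableAt_of_deriv_ne_zero (hc' ▸ smul_ne_zero ht.ne' hξ₀)
  have hderiv : HasDerivAt (fun s => c (t⁻¹ * s)) ξ 0 := by
    have hinner : HasDerivAt (fun s : ℝ => t⁻¹ * s) t⁻¹ 0 := by
      simpa using (hasDerivAt_id (0 : ℝ)).const_mul t⁻¹
    have houter : HasDerivAt c (t • ξ) (t⁻¹ * 0) := by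
      rw [mul_zero, ← hc']
      exact hdiff.hasDerivAt
    have hscomp := houter.scomp (0 : ℝ) hinner
    rw [smul_smul, inv_mul_cancel₀ ht.ne', one_smul] at hscomp
    exact hscomp
  refine ⟨fun s => c (t⁻¹ * s), .of_isGeodesicOn hB hcomp, by simpa using hc₀,
    hderiv.hasDerivWithinAt.derivWithin (uniqueDiffOn_Ici 0 0 self_mem_Ici), ?_⟩
  simp only [hc₁, inv_mul_cancel₀ ht.ne']

namespace IsUnitGeodesicOn

variable {n : ℕ} {B : BilinField n} {k K : ℝ} {γ : ℝ → En n}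

lemma exp_smul_derivWithin (h : IsUnitGeodesicOn B γ (Ici 0)) (hB : IsUniformlyEuclidean B k K)
    {ex : En n → En n} (hex : IsExpAt B.toMetric (γ 0) ex) {t : ℝ} (ht : 0 < t) :
    ex (t • derivWithin γ (Ici 0) 0) = γ t := by
  obtain ⟨σ, hσ, hσ₀, hσ', hexσ⟩ :=
    hex.exists_isUnitGeodesicOn hB (h.unit_speed 0 self_mem_Ici) ht
  exact hexσ.trans (eqOn_Ici hB hσ h hσ₀ hσ' ht.le)

theorem tendsto_cocompact (h : IsUnitGeodesicOn B γ (Ici 0)) (hB : IsUniformlyEuclidean B k K)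
    (hproper : ProperExpAll B.toMetric) : Tendsto γ atTop (cocompact (En n)) := by
  obtain ⟨ex, hex, hcompact⟩ := hproper (γ 0)
  have hξ : derivWithin γ (Ici 0) 0 ≠ 0 := by
    intro hzero
    have hspeed := h.unit_speed 0 self_mem_Ici
    simp [hzero] at hspeed
  have hline : Tendsto (fun t : ℝ => t • derivWithin γ (Ici 0) 0) atTop (cocompact (En n)) := by
    rw [← Metric.cobounded_eq_cocompact, ← tendsto_norm_atTop_iff_cobounded]
    simp only [norm_smul, Real.norm_eq_abs]
    exact tendsto_abs_atTop_atTop.atTop_mul_const (norm_pos_iff.2 hξ)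
  refine hasBasis_cocompact.tendsto_right_iff.2 fun S hS => ?_
  filter_upwards [hline.eventually (hcompact S hS).compl_mem_cocompact, eventually_gt_atTop 0]
    with t ht hpos
  rwa [← h.exp_smul_derivWithin hB hex hpos]

end IsUnitGeodesicOn

namespace IsUniformlyEuclidean

variable {n : ℕ} {B : BilinField n} {k K R : ℝ}

lemma isCompact_unit_tangent (hB : IsUniformlyEuclidean B k K) (r : ℝ) :
    IsCompact {z : En n × En n | ‖z.1‖ ≤ r ∧ B z.1 z.2 z.2 = 1} := by
  refine ((isCompact_closedBall 0 r).prod (isCompact_closedBall 0 k⁻¹)).of_isClosed_subset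
    ((isClosed_le continuous_fst.norm continuous_const).inter
      (isClosed_eq hB.contDiff_energyDensity.continuous continuous_const)) fun z hz => ?_
  rw [mem_prod, mem_closedBall_zero_iff, mem_closedBall_zero_iff]
  have hle := hB.mul_norm_le_sqrt z.1 z.2
  rw [hz.2, Real.sqrt_one, ← le_inv_mul_iff₀ hB.k_pos, mul_one] at hle
  exact ⟨hz.1, hle⟩

lemma eventually_forall_lt_norm (hB : IsUniformlyEuclidean B k K)
    (hC : IsAlmostConical B (k ^ 2 / 4) R) (hproper : ProperExpAll B.toMetric) {z : En n × En n}
    (hz : B z.1 z.2 z.2 = 1) :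
    ∃ T, ∀ᶠ w in nhds z, ∀ γ, IsUnitGeodesicOn B γ (Ici 0) →
      (γ 0, derivWithin γ (Ici 0) 0) = w → ∀ t, T ≤ t → R < ‖γ t‖ := by
  obtain ⟨ex, hex, -⟩ := hproper z.1
  obtain ⟨σ, hσ, hσ₀, hσ', -⟩ := hex.exists_isUnitGeodesicOn hB hz one_pos
  obtain ⟨T₀, hT₀⟩ := eventually_atTop.1 <|
    (tendsto_norm_cocompact_atTop.comp (hσ.tendsto_cocompact hB hproper)).eventually_gt_atTop R
  obtain ⟨T, hT, hphase⟩ := hσ.exists_phase_mem_escapeRegion hB hC (le_max_right T₀ 0)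
    fun t ht => hT₀ t ((le_max_left _ _).trans ht)
  have hev := hσ.eventually_phase_mem hB hT ((isOpen_escapeRegion n k R).mem_nhds hphase)
  rw [hσ₀, hσ'] at hev
  exact ⟨T, hev.mono fun w hw γ hγ hγw t ht =>
    hγ.lt_norm_of_phase_mem hB hC hT (hw γ hγ hγw) ht⟩

theorem exists_forall_lt_norm (hB : IsUniformlyEuclidean B k K)
    (hC : IsAlmostConical B (k ^ 2 / 4) R) (hproper : ProperExpAll B.toMetric) (r : ℝ) :
    ∃ T, ∀ γ, IsUnitGeodesicOn B γ (Ici 0) → ‖γ 0‖ ≤ r → ∀ t, T ≤ t → R < ‖γ t‖ := by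
  suffices h : ∃ T, ∀ γ, IsUnitGeodesicOn B γ (Ici 0) → (γ 0, derivWithin γ (Ici 0) 0) ∈
      {z : En n × En n | ‖z.1‖ ≤ r ∧ B z.1 z.2 z.2 = 1} → ∀ t, T ≤ t → R < ‖γ t‖ from
    h.imp fun T hT γ hγ hr => hT γ hγ ⟨hr, hγ.unit_speed 0 self_mem_Ici⟩
  refine (hB.isCompact_unit_tangent r).induction_on (p := fun s => ∃ T, ∀ γ,
    IsUnitGeodesicOn B γ (Ici 0) → (γ 0, derivWithin γ (Ici 0) 0) ∈ s → ∀ t, T ≤ t → R < ‖γ t‖)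
    ⟨0, fun _ _ h => h.elim⟩ ?_ ?_ fun z hz => ?_
  · rintro s s' hs ⟨T, hT⟩
    exact ⟨T, fun γ hγ hγs => hT γ hγ (hs hγs)⟩
  · rintro s s' ⟨T, hT⟩ ⟨T', hT'⟩
    refine ⟨max T T', fun γ hγ hγs t ht => ?_⟩
    exact hγs.elim (fun h => hT γ hγ h t ((le_max_left _ _).trans ht))
      fun h => hT' γ hγ h t ((le_max_right _ _).trans ht)
  · obtain ⟨T, hT⟩ := hB.eventually_forall_lt_norm hC hproper hz.2
    exact ⟨_, nhdsWithin_le_nhds hT, T, fun γ hγ hγw => hγw γ hγ rfl⟩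

end IsUniformlyEuclidean

/-! ### Asymptotically conical metrics -/

section Basis

variable {ι E F X : Type*} [Finite ι] [NormedAddCommGroup E] [NormedSpace ℝ E]
  [NormedAddCommGroup F] [NormedSpace ℝ F] (b : Module.Basis ι ℝ E)

lemma contDiff_of_forall_apply_basis [FiniteDimensional ℝ E] [NormedAddCommGroup X]
    [NormedSpace ℝ X] {m : WithTop ℕ∞} {f : X → E →L[ℝ] F}
    (hf : ∀ i, ContDiff ℝ m fun x => f x (b i)) : ContDiff ℝ m f := by
  cases nonempty_fintype ι
  refine contDiff_clm_apply_iff.2 fun v => ?_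
  rw [← b.sum_repr v]
  simp only [map_sum, map_smul]
  exact ContDiff.sum fun i _ => (hf i).const_smul _

lemma tendsto_norm_zero_of_forall_apply_basis {l : Filter X} {f : X → E →L[ℝ] F}
    (hf : ∀ i, Tendsto (fun x => ‖f x (b i)‖) l (nhds 0)) :
    Tendsto (fun x => ‖f x‖) l (nhds 0) := by
  cases nonempty_fintype ι
  obtain ⟨C, -, hC⟩ := b.exists_opNorm_le (F := F)
  have hsum : Tendsto (fun x => C * ∑ i, ‖f x (b i)‖) l (nhds 0) := by
    simpa using (tendsto_finsetSum Finset.univ fun i _ => hf i).const_mul C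
  refine squeeze_zero (fun x => norm_nonneg _) (fun x => hC (by positivity) fun i => ?_) hsum
  exact Finset.single_le_sum (f := fun i => ‖f x (b i)‖) (fun _ _ => norm_nonneg _)
    (Finset.mem_univ i)

end Basis

lemma hasDerivAt_comp_smul {E F : Type*} [NormedAddCommGroup E] [NormedSpace ℝ E]
    [NormedAddCommGroup F] [NormedSpace ℝ F] {f : E → F} {x : E} (hf : DifferentiableAt ℝ f x) :
    HasDerivAt (fun s : ℝ => f (s • x)) (fderiv ℝ f x x) 1 := by
  have hline : HasDerivAt (fun s : ℝ => s • x) x 1 := by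
    simpa using (hasDerivAt_id (1 : ℝ)).smul_const x
  have hf' : HasFDerivAt f (fderiv ℝ f x) ((1 : ℝ) • x) := by
    rw [one_smul]
    exact hf.hasFDerivAt
  exact hf'.comp_hasDerivAt 1 hline

lemma fderiv_clm_apply_const {E F G : Type*} [NormedAddCommGroup E] [NormedSpace ℝ E]
    [NormedAddCommGroup F] [NormedSpace ℝ F] [NormedAddCommGroup G] [NormedSpace ℝ G]
    {f : E → F →L[ℝ] G} {x : E} (hf : DifferentiableAt ℝ f x) (v : F) (u : E) :
    fderiv ℝ (fun y => f y v) x u = fderiv ℝ f x u v := by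
  simp [fderiv_clm_apply hf (differentiableAt_const v)]

/-- The field of continuous bilinear forms with a given underlying metric tensor. -/
noncomputable def BilinField.ofMetric {n : ℕ} (G : MetricTensor n)
    (symm : ∀ x v w, G x v w = G x w v) (add_left : ∀ x v w u, G x (v + w) u = G x v u + G x w u)
    (smul_left : ∀ x (a : ℝ) v u, G x (a • v) u = a * G x v u) : BilinField n := fun x =>
  (LinearMap.mk₂ ℝ (G x) (add_left x) (smul_left x)
    (fun v w u => by rw [symm, add_left, symm x w, symm x u])
    (fun a v w => by rw [symm, smul_left, symm x w, smul_eq_mul])).toContinuousBilinearMap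

/-- The cone metric of opening angle `α` as a field of continuous bilinear forms. -/
noncomputable def BilinField.cone (n : ℕ) (α : ℝ) : BilinField n :=
  .ofMetric (coneMetric n α)
    (fun x v w => by simp only [coneMetric, real_inner_comm v w]; ring)
    (fun x v w u => by simp only [coneMetric, inner_add_left]; ring)
    (fun x a v u => by simp only [coneMetric, real_inner_smul_left]; ring)

lemma coneMetric_smul {n : ℕ} (α : ℝ) {s : ℝ} (hs : s ≠ 0) (x v w : En n) :
    coneMetric n α (s • x) v w = coneMetric n α x v w := by
  simp only [coneMetric, real_inner_smul_right, norm_smul, mul_pow, Real.norm_eq_abs, sq_abs]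
  field_simp

lemma differentiableAt_coneMetric {n : ℕ} (α : ℝ) {x : En n} (hx : x ≠ 0) (v w : En n) :
    DifferentiableAt ℝ (fun y => coneMetric n α y v w) x := by
  have hnorm : ‖x‖ ^ 2 ≠ 0 := pow_ne_zero 2 (norm_ne_zero_iff.2 hx)
  have hinner (u : En n) : DifferentiableAt ℝ (fun y : En n => ⟪u, y⟫) x :=
    (differentiableAt_const u).inner ℝ differentiableAt_id
  simp only [coneMetric, div_eq_mul_inv]
  exact ((((hinner v).fun_mul (hinner w)).fun_mul
    ((differentiableAt_id.norm_sq ℝ).fun_inv hnorm)).const_mul _).add (differentiableAt_const _)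

namespace BilinField

variable {n : ℕ} {α : ℝ}

lemma cone_apply (x v w : En n) : cone n α x v w = coneMetric n α x v w := rfl

lemma cone_radial {x : En n} (hx : x ≠ 0) (v : En n) : cone n α x v x = ⟪v, x⟫ := by
  have hx' : ‖x‖ ≠ 0 := norm_ne_zero_iff.2 hx
  rw [cone_apply]
  simp only [coneMetric, real_inner_self_eq_norm_sq]
  field_simp
  ring

lemma sin_sq_mul_le_cone (x v : En n) : sin α ^ 2 * ‖v‖ ^ 2 ≤ cone n α x v v := by
  rw [cone_apply, coneMetric, real_inner_self_eq_norm_sq, le_add_iff_nonneg_left]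
  exact mul_nonneg (sub_nonneg.2 (sin_sq_le_one α))
    (div_nonneg (mul_self_nonneg _) (sq_nonneg _))

lemma cone_le (x v : En n) : cone n α x v v ≤ ‖v‖ ^ 2 := by
  have hcs : ⟪v, x⟫ * ⟪v, x⟫ / ‖x‖ ^ 2 ≤ ‖v‖ ^ 2 := by
    refine div_le_of_le_mul₀ (sq_nonneg _) (sq_nonneg _) ?_
    rw [← sq, ← mul_pow, sq_le_sq, abs_of_nonneg (by positivity : 0 ≤ ‖v‖ * ‖x‖)]
    exact abs_real_inner_le_norm v x
  have hα := mul_le_mul_of_nonneg_left hcs (sub_nonneg.2 (sin_sq_le_one α))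
  rw [cone_apply, coneMetric, real_inner_self_eq_norm_sq]
  linarith

lemma exists_forall_mul_le_and_le_mul {B : BilinField n} (hB : Continuous B)
    (hpos : ∀ x v, v ≠ 0 → 0 < B x v v) (r : ℝ) :
    ∃ m > 0, ∃ M, ∀ x, ‖x‖ ≤ r → ∀ v, m * ‖v‖ ^ 2 ≤ B x v v ∧ B x v v ≤ M * ‖v‖ ^ 2 := by
  have hcont : Continuous fun z : En n × En n => B z.1 z.2 z.2 :=
    ((hB.comp continuous_fst).clm_apply continuous_snd).clm_apply continuous_snd
  have hcompact := (isCompact_closedBall (0 : En n) r).prod (isCompact_sphere (0 : En n) 1)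
  obtain ⟨m, hm, hlower⟩ := hcompact.exists_forall_le' hcont.continuousOn (a := 0)
    fun z hz => hpos z.1 z.2 (ne_zero_of_mem_unit_sphere ⟨z.2, hz.2⟩)
  obtain ⟨M, hupper⟩ := hcompact.exists_bound_of_continuousOn hcont.continuousOn
  refine ⟨m, hm, M, fun x hx v => ?_⟩
  rcases eq_or_ne v 0 with rfl | hv
  · simp
  have hv' : ‖v‖ ≠ 0 := norm_ne_zero_iff.2 hv
  have hunit : (x, ‖v‖⁻¹ • v) ∈ Metric.closedBall (0 : En n) r ×ˢ
      Metric.sphere (0 : En n) 1 :=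
    ⟨by simpa using hx, by simp [norm_smul, hv']⟩
  have hscale : B x (‖v‖⁻¹ • v) (‖v‖⁻¹ • v) * ‖v‖ ^ 2 = B x v v := by
    simp only [map_smul, smul_apply, smul_eq_mul]
    field_simp
  rw [← hscale]
  exact ⟨mul_le_mul_of_nonneg_right (hlower _ hunit) (sq_nonneg _),
    mul_le_mul_of_nonneg_right ((le_abs_self _).trans (hupper _ hunit)) (sq_nonneg _)⟩

theorem exists_isUniformlyEuclidean {B : BilinField n} (hB : ContDiff ℝ 2 B)
    (hsymm : ∀ x v w, B x v w = B x w v) (hpos : ∀ x v, v ≠ 0 → 0 < B x v v) {m M : ℝ}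
    (hm : 0 < m) (hfar : ∀ᶠ x in Bornology.cobounded (En n), ∀ v,
      m * ‖v‖ ^ 2 ≤ B x v v ∧ B x v v ≤ M * ‖v‖ ^ 2) :
    ∃ k K, IsUniformlyEuclidean B k K := by
  obtain ⟨r, -, hr⟩ := hasBasis_cobounded_norm.eventually_iff.1 hfar
  obtain ⟨m₀, hm₀, M₀, hnear⟩ := exists_forall_mul_le_and_le_mul hB.continuous hpos r
  refine ⟨√(min m₀ m), √(max (max M₀ M) 1), hB, hsymm, Real.sqrt_pos.2 (lt_min hm₀ hm),
    by positivity, fun x v => ?_, fun x v => ?_⟩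
  · rw [mul_pow, Real.sq_sqrt (lt_min hm₀ hm).le]
    rcases le_total ‖x‖ r with hx | hx
    · exact le_trans (by gcongr; exact min_le_left _ _) (hnear x hx v).1
    · exact le_trans (by gcongr; exact min_le_right _ _) (hr hx v).1
  · rw [mul_pow, Real.sq_sqrt (by positivity)]
    rcases le_total ‖x‖ r with hx | hx
    · exact (hnear x hx v).2.trans (by gcongr; simp)
    · exact (hr hx v).2.trans (by gcongr; simp)

end BilinField

lemma tendsto_const_mul_norm_rpow_neg {E : Type*} [NormedAddCommGroup E] {μ : ℝ} (hμ : 0 < μ)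
    (C : ℝ) : Tendsto (fun x : E => C * ‖x‖ ^ (-μ)) (Bornology.cobounded E) (nhds 0) := by
  simpa using ((tendsto_rpow_neg_atTop hμ).comp tendsto_norm_cobounded_atTop).const_mul C

namespace IsAsympConical

variable {n : ℕ} {g : MetricTensor n} {α μ : ℝ}

/-- The metric of an asymptotically conical manifold as a field of continuous bilinear forms. -/
noncomputable def form (hg : IsAsympConical n g α μ) : BilinField n :=
  .ofMetric g hg.symm hg.add_left hg.smul_left

lemma toMetric_form (hg : IsAsympConical n g α μ) : hg.form.toMetric = g := rfl

lemma contDiff_form (hg : IsAsympConical n g α μ) : ContDiff ℝ 2 hg.form := by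
  refine contDiff_of_forall_apply_basis (EuclideanSpace.basisFun (Fin n) ℝ).toBasis fun i =>
    contDiff_of_forall_apply_basis (EuclideanSpace.basisFun (Fin n) ℝ).toBasis fun j => ?_
  simp only [OrthonormalBasis.coe_toBasis, EuclideanSpace.basisFun_apply]
  exact hg.reg i j

theorem tendsto_norm_form_sub_cone (hg : IsAsympConical n g α μ) (hμ : 0 < μ) :
    Tendsto (fun x => ‖hg.form x - BilinField.cone n α x‖) (Bornology.cobounded (En n))
      (nhds 0) := by
  refine tendsto_norm_zero_of_forall_apply_basis (EuclideanSpace.basisFun (Fin n) ℝ).toBasis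
    fun i => tendsto_norm_zero_of_forall_apply_basis (EuclideanSpace.basisFun (Fin n) ℝ).toBasis
    fun j => ?_
  obtain ⟨C, R, -, hdecay⟩ := hg.decay i j
  refine squeeze_zero' (.of_forall fun _ => norm_nonneg _) ?_ (tendsto_const_mul_norm_rpow_neg hμ C)
  filter_upwards [tendsto_norm_cobounded_atTop.eventually_ge_atTop R] with x hx
  have hentry := hdecay x hx 0 (by norm_num)
  rw [norm_iteratedFDeriv_zero, Nat.cast_zero, sub_zero] at hentry
  simp only [OrthonormalBasis.coe_toBasis, EuclideanSpace.basisFun_apply]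
  exact hentry

lemma fderiv_form_apply_self (hg : IsAsympConical n g α μ) {x : En n} (hx : x ≠ 0) (v w : En n) :
    fderiv ℝ hg.form x x v w = fderiv ℝ (fun y => g y v w - coneMetric n α y v w) x x := by
  have hform := hg.contDiff_form.differentiable two_ne_zero x
  have hrow := hform.clm_apply (differentiableAt_const v)
  have hentry : DifferentiableAt ℝ (fun y => g y v w) x :=
    hrow.clm_apply (differentiableAt_const w)
  rw [← fderiv_clm_apply_const hform, ← fderiv_clm_apply_const hrow]
  have hsub := hasDerivAt_comp_smul (hentry.fun_sub (differentiableAt_coneMetric α hx v w))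
  refine (((hasDerivAt_comp_smul hentry).sub_const
    (coneMetric n α x v w)).congr_of_eventuallyEq ?_).unique hsub
  filter_upwards [eventually_ne_nhds one_ne_zero] with s hs
  rw [coneMetric_smul α hs]

theorem tendsto_norm_fderiv_form_apply_self (hg : IsAsympConical n g α μ) (hμ : 0 < μ) :
    Tendsto (fun x => ‖fderiv ℝ hg.form x x‖) (Bornology.cobounded (En n)) (nhds 0) := by
  refine tendsto_norm_zero_of_forall_apply_basis (EuclideanSpace.basisFun (Fin n) ℝ).toBasis
    fun i => tendsto_norm_zero_of_forall_apply_basis (EuclideanSpace.basisFun (Fin n) ℝ).toBasis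
    fun j => ?_
  obtain ⟨C, R, -, hdecay⟩ := hg.decay i j
  refine squeeze_zero' (.of_forall fun _ => norm_nonneg _) ?_ (tendsto_const_mul_norm_rpow_neg hμ C)
  filter_upwards [tendsto_norm_cobounded_atTop.eventually_ge_atTop R,
    Bornology.eventually_ne_cobounded 0] with x hx hx₀
  have hx' : ‖x‖ ≠ 0 := norm_ne_zero_iff.2 hx₀
  have hfderiv := hdecay x hx 1 (by norm_num)
  rw [norm_iteratedFDeriv_one, Nat.cast_one, Real.rpow_sub_one hx'] at hfderiv
  simp only [OrthonormalBasis.coe_toBasis, EuclideanSpace.basisFun_apply,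
    hg.fderiv_form_apply_self hx₀]
  calc _ ≤ C * (‖x‖ ^ (-μ) / ‖x‖) * ‖x‖ := ContinuousLinearMap.le_of_opNorm_le _ hfderiv x
    _ = C * ‖x‖ ^ (-μ) := by field_simp

theorem exists_isAlmostConical (hg : IsAsympConical n g α μ) (hμ : 0 < μ) {ε : ℝ} (hε : 0 < ε) :
    ∃ R, IsAlmostConical hg.form ε R := by
  obtain ⟨R, -, hR⟩ := hasBasis_cobounded_norm.eventually_iff.1 <|
    ((hg.tendsto_norm_form_sub_cone hμ).eventually_le_const hε).and <|
    ((hg.tendsto_norm_fderiv_form_apply_self hμ).eventually_le_const hε).and <|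
    Bornology.eventually_ne_cobounded 0
  refine ⟨R, fun x hx v => ?_, fun x hx v => ?_⟩ <;> obtain ⟨hclose, hderiv, hx₀⟩ := hR hx
  · rw [← BilinField.cone_radial (α := α) hx₀]
    exact ContinuousLinearMap.le_of_opNorm₂_le_of_le _ hclose le_rfl le_rfl
  · rw [sq, ← mul_assoc]
    exact ContinuousLinearMap.le_of_opNorm₂_le_of_le _ hderiv le_rfl le_rfl

theorem exists_isUniformlyEuclidean (hg : IsAsympConical n g α μ) (hα : sin α ≠ 0) (hμ : 0 < μ) :
    ∃ k K, IsUniformlyEuclidean hg.form k K := by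
  have hε : 0 < sin α ^ 2 / 2 := by positivity
  refine BilinField.exists_isUniformlyEuclidean hg.contDiff_form hg.symm hg.posdef hε
    (M := 1 + sin α ^ 2 / 2) ?_
  filter_upwards [(hg.tendsto_norm_form_sub_cone hμ).eventually_le_const hε] with x hx v
  have hclose : |hg.form x v v - BilinField.cone n α x v v| ≤ sin α ^ 2 / 2 * ‖v‖ * ‖v‖ :=
    ContinuousLinearMap.le_of_opNorm₂_le_of_le _ hx le_rfl le_rfl
  rw [abs_le] at hclose
  have hlower := BilinField.sin_sq_mul_le_cone (α := α) x v
  have hupper := BilinField.cone_le (α := α) x v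
  constructor <;> linarith

end IsAsympConical

/-! ### Return times -/

theorem statement_12_general (n : ℕ) (g : MetricTensor n) (α μ : ℝ) (hα : sin α ≠ 0) (hμ : 0 < μ)
    (hg : IsAsympConical n g α μ) (hproper : ProperExpAll g) (r : ℝ) :
    ∃ C, ∀ γ, IsGeodesicOn (rdist g) γ 1 (Ici 0) → ‖γ 0‖ ≤ r → ∀ t, ‖γ t‖ ≤ r → t ≤ C := by
  obtain ⟨k, K, hB⟩ := hg.exists_isUniformlyEuclidean hα hμ
  have hε : 0 < k ^ 2 / 4 := by
    have := hB.k_pos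
    positivity
  obtain ⟨R, hC⟩ := hg.exists_isAlmostConical hμ hε
  rw [← hg.toMetric_form] at hproper ⊢
  obtain ⟨T, hT⟩ := hB.exists_forall_lt_norm (hC.mono (le_max_left R r)) hproper r
  refine ⟨T, fun γ hγ hstart t ht => le_of_not_ge fun hTt => ?_⟩
  have hescape := hT γ (.of_isGeodesicOn hB hγ) hstart t hTt
  exact ((le_max_right R r).trans_lt hescape).not_ge ht

/-- uniform return-time bound for geodesic rays.
Let `(ℝⁿ,g)` be asymptotically conical with proper exponential maps, and let
`γ_j : [0,∞) → M` be arc-length geodesic rays with `γ_j(0) ∈ ∂B(o,r)`, unit initial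
velocity, and `(γ_j(0), γ̇_j(0)) → (p, ξ)`. Then the last times `T_j` at which
`|γ_j(T_j)| = r` are finite and uniformly bounded: there is `C` such that every `t > 0`
with `|γ_j(t)| = r` satisfies `t ≤ C` (so `sup_j T_j = sup_j ℓ_g(γ_j|_{[0,T_j]}) < ∞`). -/
theorem statement_12 (n : ℕ) (hn : 2 ≤ n) (g : MetricTensor n) (α μ : ℝ)
    (hα : α ∈ Set.Ioo 0 (π / 2)) (hμ : 0 < μ) (hg : IsAsympConical n g α μ)
    (hproper : ProperExpAll g)
    (γ : ℕ → ℝ → En n) (r : ℝ) (hr : 0 < r) (p ξ : En n)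
    (hgeo : ∀ j, IsGeodesicOn (rdist g) (γ j) 1 (Set.Ici 0))
    (hstart : ∀ j, ‖γ j 0‖ = r)
    (hunit : ∀ j, g (γ j 0) (derivWithin (γ j) (Set.Ici 0) 0)
      (derivWithin (γ j) (Set.Ici 0) 0) = 1)
    (hp : ‖p‖ = r) (hξ : g p ξ ξ = 1)
    (hconv0 : Filter.Tendsto (fun j => γ j 0) Filter.atTop (nhds p))
    (hconv1 : Filter.Tendsto (fun j => derivWithin (γ j) (Set.Ici 0) 0)
      Filter.atTop (nhds ξ)) :
    ∃ C : ℝ, ∀ j, ∀ t : ℝ, 0 < t → ‖γ j t‖ = r → t ≤ C := by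
  obtain ⟨C, hC⟩ := statement_12_general n g α μ
    (sin_pos_of_pos_of_lt_pi hα.1 (hα.2.trans (half_lt_self pi_pos))).ne' hμ hg hproper r
  exact ⟨C, fun j t _ ht => hC (γ j) (hgeo j) (hstart j).le t ht.le⟩
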